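/- Let n ≥ 4. The (n-2)-minors of X form a Gröbner basis of I_{n-2} with respect to ≺: the initial ideal in_≺(I_{n-2}) equals the ideal of S generated by the leading monomials in_≺(Δ) of all (n-2)×(n-2) minors Δ of X. -/

import Mathlib

open MvPolynomial

/-- The set `D` of diagonal variables `x_{ii}` (0-indexed). -/
def Dset (n : ℕ) : Set (Sym2 (Fin n)) := {v | ∃ i : Fin n, v = s(i, i)}

/-- The set `U` of variables `x_{13}, x_{24}, …, x_{n-2,n}, x_{12}, x_{n-1,n}` (0-indexed). -/
def Uset (n : ℕ) : Set (Sym2 (Fin n)) :=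
  {v | ∃ i j : Fin n, v = s(i, j) ∧
    ((j : ℕ) = (i : ℕ) + 2 ∨ ((i : ℕ) = 0 ∧ (j : ℕ) = 1) ∨
      ((i : ℕ) = n - 2 ∧ (j : ℕ) = n - 1))}

/-- `rank` encodes the linear order on the variables described in the paper:
`x_{11} ≻ … ≻ x_{nn} ≻ x_{13} ≻ … ≻ x_{n-2,n} ≻ x_{12} ≻ x_{n-1,n} ≻ (rest)`,
where a smaller rank means a larger variable. -/
def IsGoodRank (n : ℕ) (rank : Sym2 (Fin n) → ℕ) : Prop :=
  Function.Injective rank ∧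
  (∀ i : Fin n, rank s(i, i) = (i : ℕ)) ∧
  (∀ i j : Fin n, (j : ℕ) = (i : ℕ) + 2 → rank s(i, j) = n + (i : ℕ)) ∧
  (∀ i j : Fin n, (i : ℕ) = 0 → (j : ℕ) = 1 → rank s(i, j) = 2 * n - 2) ∧
  (∀ i j : Fin n, (i : ℕ) = n - 2 → (j : ℕ) = n - 1 → rank s(i, j) = 2 * n - 1) ∧
  (∀ v : Sym2 (Fin n), v ∉ Dset n ∪ Uset n → 2 * n ≤ rank v)

/-- The degree reverse lexicographic order on exponent vectors induced by `rank`: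
`a ≺ b` iff `deg a < deg b`, or the degrees agree and at the `rank`-largest (i.e. smallest)
variable where `a` and `b` differ, `a` has the larger exponent. -/
def DegRevLexLT {n : ℕ} (rank : Sym2 (Fin n) → ℕ) (a b : Sym2 (Fin n) →₀ ℕ) : Prop :=
  (a.sum fun _ e => e) < (b.sum fun _ e => e) ∨
    ((a.sum fun _ e => e) = (b.sum fun _ e => e) ∧
      ∃ v : Sym2 (Fin n), b v < a v ∧ ∀ w : Sym2 (Fin n), rank v < rank w → a w = b w)

/-- `μ` is the leading monomial (exponent vector) of `f` w.r.t. the degrevlex order `≺`. -/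
def IsLeadingMonomial {K : Type*} [Field K] {n : ℕ} (rank : Sym2 (Fin n) → ℕ)
    (f : MvPolynomial (Sym2 (Fin n)) K) (μ : Sym2 (Fin n) →₀ ℕ) : Prop :=
  μ ∈ f.support ∧ ∀ ν ∈ f.support, ν ≠ μ → DegRevLexLT rank ν μ

/-- The minor `[a_1,…,a_s | b_1,…,b_s]` of the generic symmetric matrix `X = (x_{ij})`. -/
noncomputable def symMinor (K : Type*) [Field K] {n s : ℕ} (a b : Fin s → Fin n) :
    MvPolynomial (Sym2 (Fin n)) K :=
  Matrix.det (Matrix.of fun k l => (MvPolynomial.X s(a k, b l) : MvPolynomial (Sym2 (Fin n)) K))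

/-- The ideal `I_t` of `S` generated by all `t × t` minors of the generic symmetric
matrix `X`. -/
noncomputable def minorsIdeal (K : Type*) [Field K] (n t : ℕ) :
    Ideal (MvPolynomial (Sym2 (Fin n)) K) :=
  Ideal.span {p | ∃ a b : Fin t → Fin n, StrictMono a ∧ StrictMono b ∧ p = symMinor K a b}

/-- The initial ideal `in_≺(I)`: the ideal generated by the leading monomials of the
nonzero elements of `I`. -/
noncomputable def initialIdeal {K : Type*} [Field K] {n : ℕ} (rank : Sym2 (Fin n) → ℕ)
    (I : Ideal (MvPolynomial (Sym2 (Fin n)) K)) : Ideal (MvPolynomial (Sym2 (Fin n)) K) :=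
  Ideal.span {p | ∃ f ∈ I, f ≠ 0 ∧ ∃ μ : Sym2 (Fin n) →₀ ℕ,
    IsLeadingMonomial rank f μ ∧ p = MvPolynomial.monomial μ 1}

/-! The variables in `U` are the edges of a cycle through the `n` indices, and the leading monomial
of a minor of size `n - 2` obtained by deleting suitable rows and columns is a product of loops and
edges of this cycle: all the loops except those on two arcs, and the edges along these two arcs.
Call these monomials special, and call a monomial standard if no special one divides it. By
division it suffices to show that a nonzero combination `f` of standard monomials is not in the
ideal of minors, hence to exhibit a symmetric matrix of rank at most `n - 3` at which `f` does not
vanish.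

A greedy search along the cycle shows that a standard monomial `m` omits three edges, cutting the
cycle into three paths, and one loop on each path. Fixing weights `w` on the positions, `0` on the
diagonal, `1` on the edges and large elsewhere, we find a symmetric matrix of rank `n - 3` over
`L⟦t⟧` whose entry at `v` is `x_v t ^ w(v)` up to higher order terms, except that it has higher
order at the omitted loops and edges; here the `x_v` are algebraically independent elements of `L`.
Indeed each path is a tree with the omitted loop as its root and carries an approximate kernel
vector, and there is exactly one edge between any two paths to correct the pairing of their
vectors. Choosing `m` of least weight in `f`, the lowest term of the value of `f` at this matrix is
nonzero.
-/

section TermOrder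

variable {n : ℕ} {rank : Sym2 (Fin n) → ℕ} {a b c : Sym2 (Fin n) →₀ ℕ}

lemma degRevLexLT_irrefl (a : Sym2 (Fin n) →₀ ℕ) : ¬ DegRevLexLT rank a a := by
  rintro (h | ⟨_, v, hv, _⟩)
  exacts [lt_irrefl _ h, lt_irrefl _ hv]

lemma DegRevLexLT.trans (hrank : Function.Injective rank) (hab : DegRevLexLT rank a b)
    (hbc : DegRevLexLT rank b c) : DegRevLexLT rank a c := by
  rcases hab with hab | ⟨hab, v, hv, hvw⟩ <;> rcases hbc with hbc | ⟨hbc, w, hw, hwx⟩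
  · exact .inl (hab.trans hbc)
  · exact .inl (hbc ▸ hab)
  · exact .inl (hab ▸ hbc)
  refine .inr ⟨hab.trans hbc, ?_⟩
  rcases lt_trichotomy (rank v) (rank w) with h | h | h
  · exact ⟨w, hvw w h ▸ hw, fun x hx ↦ (hvw x (h.trans hx)).trans (hwx x hx)⟩
  · obtain rfl := hrank h
    exact ⟨v, hw.trans hv, fun x hx ↦ (hvw x hx).trans (hwx x hx)⟩
  · exact ⟨v, hwx v h ▸ hv, fun x hx ↦ (hvw x hx).trans (hwx x (h.trans hx))⟩

lemma degRevLexLT_trichotomous (a b : Sym2 (Fin n) →₀ ℕ) :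
    DegRevLexLT rank a b ∨ a = b ∨ DegRevLexLT rank b a := by
  classical
  rcases lt_trichotomy a.degree b.degree with h | h | h
  · exact .inl (.inl h)
  · by_cases hab : a = b
    · exact .inr (.inl hab)
    obtain ⟨u, hu⟩ := DFunLike.ne_iff.1 hab
    obtain ⟨v, hv, hmax⟩ := Finset.exists_max_image {v | a v ≠ b v} rank ⟨u, by simpa using hu⟩
    have agree : ∀ w, rank v < rank w → a w = b w := fun w hw ↦ by
      by_contra hne
      exact (hmax w (by simpa using hne)).not_gt hw
    rcases Nat.lt_or_gt_of_ne (Finset.mem_filter.1 hv).2 with hlt | hlt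
    · exact .inr (.inr (.inr ⟨h.symm, v, hlt, fun w hw ↦ (agree w hw).symm⟩))
    · exact .inl (.inr ⟨h, v, hlt, agree⟩)
  · exact .inr (.inr (.inl h))

lemma DegRevLexLT.add_left (h : DegRevLexLT rank a b) (c : Sym2 (Fin n) →₀ ℕ) :
    DegRevLexLT rank (c + a) (c + b) := by
  have degree_add (x : Sym2 (Fin n) →₀ ℕ) :
      ((c + x).sum fun _ e ↦ e) = (c.sum fun _ e ↦ e) + x.sum fun _ e ↦ e :=
    map_add Finsupp.degree c x
  simpa only [DegRevLexLT, degree_add, Finsupp.add_apply, add_lt_add_iff_left,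
    add_right_inj] using h

lemma degRevLexLT_of_lt (h : a < b) : DegRevLexLT rank a b := by
  obtain ⟨c, rfl⟩ := exists_add_of_le h.le
  have hc : c ≠ 0 := by rintro rfl; simp at h
  refine .inl (?_ : a.degree < (a + c).degree)
  have := (Finsupp.degree_eq_zero_iff c).not.2 hc
  rw [map_add]
  omega

/-- A copy of the monoid of exponent vectors, to be ordered by `DegRevLexLT rank`. -/
def DegRevLexSyn (_hrank : Function.Injective rank) : Type := Sym2 (Fin n) →₀ ℕ

variable (hrank : Function.Injective rank)

noncomputable instance : AddCommMonoid (DegRevLexSyn hrank) :=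
  inferInstanceAs (AddCommMonoid (Sym2 (Fin n) →₀ ℕ))

/-- The linear order `DegRevLexLT rank` on exponent vectors. -/
noncomputable instance : LinearOrder (DegRevLexSyn hrank) :=
  haveI : IsStrictTotalOrder (DegRevLexSyn hrank) (DegRevLexLT rank) :=
    { irrefl := degRevLexLT_irrefl
      trans := fun _ _ _ ↦ DegRevLexLT.trans hrank
      trichotomous := fun a b hab hba ↦
        ((degRevLexLT_trichotomous a b).resolve_left hab).resolve_right hba }
  @linearOrderOfSTO (DegRevLexSyn hrank) (DegRevLexLT rank) this (Classical.decRel _)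

/-- The identity, viewed as a map to the monoid ordered by `DegRevLexLT rank`. -/
noncomputable def toDegRevLexSyn : (Sym2 (Fin n) →₀ ℕ) ≃+ DegRevLexSyn hrank := AddEquiv.refl _

lemma toDegRevLexSyn_lt_iff :
    toDegRevLexSyn hrank a < toDegRevLexSyn hrank b ↔ DegRevLexLT rank a b := .rfl

lemma toDegRevLexSyn_strictMono : StrictMono (toDegRevLexSyn hrank) :=
  fun _ _ h ↦ degRevLexLT_of_lt h

instance : IsOrderedAddMonoid (DegRevLexSyn hrank) where
  add_le_add_left a b hab c := by
    rcases hab.eq_or_lt with rfl | hlt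
    · rfl
    · rw [add_comm a, add_comm b]
      exact le_of_lt (DegRevLexLT.add_left hlt c)

instance : WellFoundedLT (DegRevLexSyn hrank) :=
  have hmono := (toDegRevLexSyn_strictMono hrank).monotone
  wellQuasiOrderedLE_iff_wellFoundedLT.1 <|
    hmono.wellQuasiOrderedLE_of_wellQuasiOrderedLE_of_surjective (toDegRevLexSyn hrank).surjective

/-- The degree reverse lexicographic order as a Mathlib monomial order. -/
noncomputable def degRevLexOrder : MonomialOrder (Sym2 (Fin n)) where
  syn := DegRevLexSyn hrank
  toSyn := toDegRevLexSyn hrank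
  toSyn_monotone := (toDegRevLexSyn_strictMono hrank).monotone

lemma isLeadingMonomial_iff {K : Type*} [Field K] {f : MvPolynomial (Sym2 (Fin n)) K} :
    IsLeadingMonomial rank f a ↔ f ≠ 0 ∧ (degRevLexOrder hrank).degree f = a := by
  set ord := degRevLexOrder hrank
  constructor
  · rintro ⟨ha, hlt⟩
    refine ⟨by rintro rfl; simp at ha, ord.toSyn.injective (le_antisymm ?_ (ord.le_degree ha))⟩
    refine ord.degree_le_iff.2 fun b hb ↦ ?_
    rcases eq_or_ne b a with rfl | hne
    · rfl
    · exact ((toDegRevLexSyn_lt_iff hrank).2 (hlt b hb hne)).le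
  · rintro ⟨hf, rfl⟩
    refine ⟨ord.degree_mem_support hf, fun b hb hne ↦ (toDegRevLexSyn_lt_iff hrank).1 ?_⟩
    exact (ord.le_degree hb).lt_of_ne fun h ↦ hne (ord.toSyn.injective h)

end TermOrder

section GroebnerCriterion

/-- If no nonzero element of `I` is a combination of monomials divisible by no element of `G`,
then division with remainder by elements of `I` with leading monomials in `G` ends in `0`. -/
lemma exists_le_degree_of_standard_eq_zero {σ K : Type*} [Field K] (ord : MonomialOrder σ)
    {I : Ideal (MvPolynomial σ K)} {G : Set (σ →₀ ℕ)}
    (hG : ∀ g ∈ G, ∃ b ∈ I, b ≠ 0 ∧ ord.degree b = g)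
    (hI : ∀ r ∈ I, (∀ m ∈ r.support, ∀ g ∈ G, ¬ g ≤ m) → r = 0)
    {f : MvPolynomial σ K} (hfI : f ∈ I) (hf : f ≠ 0) : ∃ g ∈ G, g ≤ ord.degree f := by
  classical
  let B : Set (MvPolynomial σ K) := {b | b ∈ I ∧ b ≠ 0 ∧ ord.degree b ∈ G}
  obtain ⟨q, r, hfqr, hdeg, hr⟩ := ord.div_set (B := B)
    (fun b hb ↦ (ord.leadingCoeff_ne_zero_iff.2 hb.2.1).isUnit) f
  have hqI : Finsupp.linearCombination _ (fun b : B ↦ (b : MvPolynomial σ K)) q ∈ I :=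
    I.sum_mem fun b _ ↦ I.mul_mem_left _ b.2.1
  have hr0 : r = 0 := hI r ((I.add_mem_iff_right hqI).1 (hfqr ▸ hfI)) fun m hm g hg hgm ↦ by
    obtain ⟨b, hbI, hb0, rfl⟩ := hG g hg
    exact hr m hm b ⟨hbI, hb0, hg⟩ hgm
  rw [hr0, add_zero, Finsupp.linearCombination_apply, Finsupp.sum] at hfqr
  obtain ⟨b, -, hb⟩ : ∃ b ∈ q.support, (q b • (b : MvPolynomial σ K)).coeff (ord.degree f) ≠ 0 := by
    apply Finset.exists_ne_zero_of_sum_ne_zero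
    rw [← MvPolynomial.coeff_sum, ← hfqr]
    exact ord.coeff_degree_ne_zero_iff.2 hf
  rw [smul_eq_mul, mul_comm] at hb
  have hbq : (b : MvPolynomial σ K) * q b ≠ 0 := fun h ↦ hb (by rw [h, coeff_zero])
  have hdeg_eq : ord.degree ((b : MvPolynomial σ K) * q b) = ord.degree f :=
    ord.toSyn.injective (le_antisymm (hdeg b) (ord.le_degree (mem_support_iff.2 hb)))
  refine ⟨_, b.2.2.2, ?_⟩
  rw [← hdeg_eq, ord.degree_mul (left_ne_zero_of_mul hbq) (right_ne_zero_of_mul hbq)]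
  exact le_self_add

end GroebnerCriterion

section CyclicLabelling

variable {n : ℕ}

/-- The graph on the indices whose edges are the positions of the variables in `U`. -/
def uGraph (n : ℕ) : SimpleGraph (Fin n) := SimpleGraph.fromEdgeSet (Uset n)

lemma uGraph_adj {a b : Fin n} : (uGraph n).Adj a b ↔ s(a, b) ∈ Uset n ∧ a ≠ b :=
  SimpleGraph.fromEdgeSet_adj _

/-- The set `U` is a cycle of length `n`; a cyclic labelling numbers the indices along it. -/
abbrev CyclicLabelling (n : ℕ) := SimpleGraph.cycleGraph n ≃g uGraph n

lemma mem_Uset_iff (a b : Fin n) : s(a, b) ∈ Uset n ↔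
    ((b : ℕ) = a + 2 ∨ ((a : ℕ) = 0 ∧ (b : ℕ) = 1) ∨ ((a : ℕ) = n - 2 ∧ (b : ℕ) = n - 1)) ∨
    ((a : ℕ) = b + 2 ∨ ((b : ℕ) = 0 ∧ (a : ℕ) = 1) ∨ ((b : ℕ) = n - 2 ∧ (a : ℕ) = n - 1)) := by
  constructor
  · rintro ⟨i, j, hij, h⟩
    rcases Sym2.eq_iff.1 hij with ⟨rfl, rfl⟩ | ⟨rfl, rfl⟩
    exacts [.inl h, .inr h]
  · rintro (h | h)
    exacts [⟨a, b, rfl, h⟩, ⟨b, a, Sym2.eq_swap, h⟩]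

lemma cycleGraph_adj_iff_val (a b : Fin n) : (SimpleGraph.cycleGraph n).Adj a b ↔
    (a : ℕ) ≠ b ∧ ((a : ℕ) + 1 = b ∨ (b : ℕ) + 1 = a ∨ ((a : ℕ) = 0 ∧ (b : ℕ) + 1 = n) ∨
      ((a : ℕ) + 1 = n ∧ (b : ℕ) = 0)) := by
  rw [SimpleGraph.cycleGraph_adj']
  rcases le_total a b with h | h
  · rcases h.eq_or_lt with rfl | hlt
    · simp [Fin.sub_val_of_le]
    · rw [Fin.coe_sub_iff_lt.2 hlt, Fin.sub_val_of_le h]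
      omega
  · rcases h.eq_or_lt with rfl | hlt
    · simp [Fin.sub_val_of_le]
    · rw [Fin.coe_sub_iff_lt.2 hlt, Fin.sub_val_of_le h]
      omega

namespace CyclicLabelling

variable (σ : CyclicLabelling n) {a b : Fin n}

lemma mem_Uset_iff (hab : a ≠ b) :
    s(σ a, σ b) ∈ Uset n ↔ (SimpleGraph.cycleGraph n).Adj a b := by
  rw [← σ.map_adj_iff, uGraph_adj, and_iff_left (σ.injective.ne hab)]

/-- Along the cycle the indices read `1, 3, 5, …, 6, 4, 2`. -/
lemma nonempty (hn : 4 ≤ n) : Nonempty (CyclicLabelling n) := by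
  let f : Fin n → Fin n :=
    fun c ↦ ⟨if 2 * (c : ℕ) < n then 2 * c else 2 * n - 1 - 2 * c, by split_ifs <;> omega⟩
  have f_val (c : Fin n) : (f c).val = if 2 * c.val < n then 2 * c.val else 2 * n - 1 - 2 * c.val :=
    rfl
  have hf : Function.Injective f := fun a b h ↦ by
    have := congrArg Fin.val h
    rw [f_val, f_val] at this
    ext
    split_ifs at this <;> omega
  refine ⟨Equiv.ofBijective f (Finite.injective_iff_bijective.1 hf), fun {a b} ↦ ?_⟩
  rw [uGraph_adj, cycleGraph_adj_iff_val, _root_.mem_Uset_iff,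
    Equiv.ofBijective_apply, Equiv.ofBijective_apply, Ne, Fin.ext_iff, f_val, f_val]
  split_ifs <;> omega

/-- The cyclic labelling `x ↦ σ (x + c)`. -/
def rotate [NeZero n] (c : Fin n) : CyclicLabelling n :=
  RelIso.trans
    { toEquiv := Equiv.addRight c
      map_rel_iff' := by simp [SimpleGraph.cycleGraph_adj'] } σ

lemma rotate_apply [NeZero n] (c x : Fin n) : σ.rotate c x = σ (x + c) := rfl

end CyclicLabelling

end CyclicLabelling

section SpecialMonomials

variable {n : ℕ}

/-- The increasing enumeration of `Fin n` without `p < q`. -/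
def skip (n p q : ℕ) (k : Fin (n - 2)) : Fin n :=
  ⟨if (k : ℕ) < p then k else if (k : ℕ) + 1 < q then k + 1 else k + 2, by split_ifs <;> omega⟩

lemma skip_val (p q : ℕ) (k : Fin (n - 2)) :
    (skip n p q k).val = if (k : ℕ) < p then k.val else if (k : ℕ) + 1 < q then k + 1 else k + 2 :=
  rfl

lemma skip_strictMono (p q : ℕ) : StrictMono (skip n p q) := fun a b hab ↦ by
  rw [Fin.lt_def] at hab ⊢
  rw [skip_val, skip_val]
  split_ifs <;> omega

lemma skip_pair_cases {p₁ p₂ p₃ p₄ : ℕ} (h₁₂ : p₁ ≤ p₂) (h₂₃ : p₂ < p₃) (h₃₄ : p₃ ≤ p₄)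
    (k : Fin (n - 2)) :
    ((skip n p₂ p₃ k).val = skip n p₁ p₄ k ∧ ((skip n p₁ p₄ k).val < p₁ ∨
      (p₂ < (skip n p₁ p₄ k).val ∧ (skip n p₁ p₄ k).val < p₃) ∨ p₄ < (skip n p₁ p₄ k).val)) ∨
    ((skip n p₂ p₃ k).val + 1 = skip n p₁ p₄ k ∧ p₁ ≤ (skip n p₂ p₃ k).val ∧
      (skip n p₂ p₃ k).val < p₂) ∨
    ((skip n p₁ p₄ k).val + 1 = skip n p₂ p₃ k ∧ p₃ ≤ (skip n p₁ p₄ k).val ∧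
      (skip n p₁ p₄ k).val < p₄) := by
  simp only [skip_val]
  split_ifs <;> omega

/-- The exponent vector of the product of the loops at `[0, p₁) ∪ (p₂, p₃) ∪ (p₄, n)` and of the
cycle edges leaving the labels in `[p₁, p₂) ∪ [p₃, p₄)`, written as the main diagonal of the minor
omitting the rows `p₂, p₃` and the columns `p₁, p₄`. -/
noncomputable def specialMonomial (σ : CyclicLabelling n) (p₁ p₂ p₃ p₄ : ℕ) :
    Sym2 (Fin n) →₀ ℕ :=
  ∑ k : Fin (n - 2), Finsupp.single s(σ (skip n p₂ p₃ k), σ (skip n p₁ p₄ k)) 1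

/-- The exponent vectors that will turn out to generate the initial ideal. -/
def specialMonomials (n : ℕ) : Set (Sym2 (Fin n) →₀ ℕ) :=
  {g | ∃ (σ : CyclicLabelling n) (p₁ p₂ p₃ p₄ : ℕ), p₁ ≤ p₂ ∧ p₂ < p₃ ∧ p₃ ≤ p₄ ∧ p₄ < n ∧
    g = specialMonomial σ p₁ p₂ p₃ p₄}

lemma sum_single_le_of_injective {κ τ : Type*} [Fintype κ] {x : κ → τ} (hx : Function.Injective x)
    {m : τ →₀ ℕ} (h : ∀ k, m (x k) ≠ 0) : ∑ k, Finsupp.single (x k) 1 ≤ m := by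
  classical
  intro t
  simp only [Finsupp.finsetSum_apply, Finsupp.single_apply]
  by_cases ht : ∃ k, x k = t
  · obtain ⟨k, rfl⟩ := ht
    simpa only [hx.eq_iff, Finset.sum_ite_eq', Finset.mem_univ, if_true] using
      Nat.one_le_iff_ne_zero.2 (h k)
  · rw [Finset.sum_eq_zero fun k _ ↦ if_neg fun hk ↦ ht ⟨k, hk⟩]
    exact Nat.zero_le _

lemma injective_sym2_mk_of_strictMono {κ α : Type*} [LinearOrder κ] [Preorder α] {r c : κ → α}
    (hr : StrictMono r) (hc : StrictMono c) : Function.Injective fun k ↦ s(r k, c k) := by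
  have ne_of_lt {k k' : κ} (hk : k < k') : s(r k, c k) ≠ s(r k', c k') := fun h ↦ by
    rcases Sym2.eq_iff.1 h with ⟨h, -⟩ | ⟨h, h'⟩
    · exact (hr hk).ne h
    · exact lt_asymm (h ▸ hr hk) (h' ▸ hc hk)
  intro k k' h
  by_contra hne
  rcases lt_or_gt_of_ne hne with hk | hk
  exacts [ne_of_lt hk h, ne_of_lt hk h.symm]

lemma specialMonomial_le [NeZero n] (σ : CyclicLabelling n) {p₁ p₂ p₃ p₄ : ℕ} (h₁₂ : p₁ ≤ p₂)
    (h₂₃ : p₂ < p₃) (h₃₄ : p₃ ≤ p₄) {m : Sym2 (Fin n) →₀ ℕ}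
    (hloop : ∀ v, v < n → v < p₁ ∨ (p₂ < v ∧ v < p₃) ∨ p₄ < v →
      m s(σ (Fin.ofNat n v), σ (Fin.ofNat n v)) ≠ 0)
    (hedge : ∀ c, c + 1 < n → (p₁ ≤ c ∧ c < p₂) ∨ (p₃ ≤ c ∧ c < p₄) →
      m s(σ (Fin.ofNat n c), σ (Fin.ofNat n (c + 1))) ≠ 0) :
    specialMonomial σ p₁ p₂ p₃ p₄ ≤ m := by
  have cell_injective := (Sym2.map.injective σ.injective).comp <|
    injective_sym2_mk_of_strictMono (skip_strictMono (n := n) p₂ p₃)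
      (skip_strictMono p₁ p₄)
  refine sum_single_le_of_injective cell_injective fun k ↦ ?_
  change m s(σ (skip n p₂ p₃ k), σ (skip n p₁ p₄ k)) ≠ 0
  have hcases := skip_pair_cases h₁₂ h₂₃ h₃₄ k
  generalize skip n p₂ p₃ k = r at *
  generalize skip n p₁ p₄ k = c at *
  have ofNat_val (x : Fin n) : Fin.ofNat n x = x := Fin.ofNat_val_eq_self x
  rcases hcases with ⟨heq, h⟩ | ⟨heq, h⟩ | ⟨heq, h⟩
  · simpa only [Fin.ext heq, ofNat_val] using hloop c c.2 h
  · simpa only [heq, ofNat_val] using hedge r (heq ▸ c.2) (.inl h)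
  · simpa only [heq, ofNat_val, Sym2.eq_swap] using hedge c (heq ▸ r.2) (.inr h)

lemma exists_first_failure (P : ℕ → Prop) {a b : ℕ} (hab : a ≤ b) :
    ∃ x, a ≤ x ∧ x ≤ b ∧ (∀ y, a ≤ y → y < x → P y) ∧ (x < b → ¬ P x) := by
  classical
  have h : ∃ x, a ≤ x ∧ (x < b → ¬ P x) := ⟨b, hab, fun hb ↦ absurd hb (lt_irrefl b)⟩
  refine ⟨Nat.find h, (Nat.find_spec h).1, Nat.find_min' h ⟨hab, by omega⟩,
    fun y hay hy ↦ ?_, (Nat.find_spec h).2⟩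
  by_contra hPy
  exact Nat.find_min h hy ⟨hay, fun _ ↦ hPy⟩

/-- Reading loops and edges alternately, stop each time at the first missing one; if the process
reached the end of the cycle early, the variables read would form a special monomial. -/
lemma exists_failures_of_no_special {n : ℕ} (hn : 2 ≤ n) {loop edge : ℕ → Prop}
    (H : ∀ p₁ p₂ p₃ p₄, p₁ ≤ p₂ → p₂ < p₃ → p₃ ≤ p₄ → p₄ < n →
      ¬ ((∀ v, v < n → v < p₁ ∨ (p₂ < v ∧ v < p₃) ∨ p₄ < v → loop v) ∧
        ∀ c, c + 1 < n → (p₁ ≤ c ∧ c < p₂) ∨ (p₃ ≤ c ∧ c < p₄) → edge c)) :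
    ∃ v₁ i v₂ j v₃, v₁ ≤ i ∧ i < v₂ ∧ v₂ ≤ j ∧ j < v₃ ∧ v₃ < n ∧
      ¬ loop v₁ ∧ ¬ loop v₂ ∧ ¬ loop v₃ ∧ ¬ edge i ∧ ¬ edge j := by
  obtain ⟨v₁, -, hv₁n, loop_lt_v₁, hv₁⟩ := exists_first_failure loop (Nat.zero_le (n - 2))
  obtain ⟨i, hv₁i, hin, edge_lt_i, hi⟩ := exists_first_failure edge hv₁n
  obtain ⟨v₂, hiv₂, hv₂n, loop_lt_v₂, hv₂⟩ :=
    exists_first_failure loop (show i + 1 ≤ n - 1 by omega)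
  obtain ⟨j, hv₂j, hjn, edge_lt_j, hj⟩ := exists_first_failure edge hv₂n
  have H' := H v₁ i v₂ j hv₁i hiv₂ hv₂j (by omega)
  have edge_lt : ∀ c, c + 1 < n → (v₁ ≤ c ∧ c < i) ∨ (v₂ ≤ c ∧ c < j) → edge c :=
    fun c _ hc ↦ hc.elim (fun h ↦ edge_lt_i c h.1 h.2) fun h ↦ edge_lt_j c h.1 h.2
  obtain ⟨v₃, hv₃n, hjv₃, hv₃⟩ : ∃ v₃ < n, j < v₃ ∧ ¬ loop v₃ := by
    by_contra! loop_gt_j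
    refine H' ⟨fun v hvn hv ↦ ?_, edge_lt⟩
    rcases hv with hv | hv | hv
    exacts [loop_lt_v₁ v (Nat.zero_le v) hv, loop_lt_v₂ v hv.1 hv.2, loop_gt_j v hvn hv]
  exact ⟨v₁, i, v₂, j, v₃, hv₁i, hiv₂, hv₂j, hjv₃, hv₃n, hv₁ (by omega), hv₂ (by omega), hv₃,
    hi (by omega), hj (by omega)⟩

end SpecialMonomials

section StandardMonomials

variable {n : ℕ}

/-- Three consecutive arcs `[0, i]`, `[i + 1, j]`, `[j + 1, n - 1]` of the cycle of length `n`, with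
a marked label `v₁`, `v₂`, `v₃` in each. -/
structure ThreeArcs (n : ℕ) where
  (v₁ i v₂ j v₃ : Fin n)
  v₁_le_i : v₁ ≤ i
  i_lt_v₂ : i < v₂
  v₂_le_j : v₂ ≤ j
  j_lt_v₃ : j < v₃

/-- The marked label of the arc containing `x`. -/
def ThreeArcs.root (P : ThreeArcs n) (x : Fin n) : Fin n :=
  if x ≤ P.i then P.v₁ else if x ≤ P.j then P.v₂ else P.v₃

lemma ThreeArcs.eq_of_root_ne (P : ThreeArcs n) {x y : Fin n} (hxy : x.val + 1 = y)
    (hroot : P.root x ≠ P.root y) : x = P.i ∨ x = P.j := by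
  contrapose! hroot
  simp only [ThreeArcs.root, Fin.le_def, ne_eq, Fin.ext_iff] at hroot ⊢
  split_ifs <;> first | rfl | omega

lemma exists_labelling_of_standard [NeZero n] (hn : 4 ≤ n) {m : Sym2 (Fin n) →₀ ℕ}
    (hm : ∀ g ∈ specialMonomials n, ¬ g ≤ m) :
    ∃ σ : CyclicLabelling n, m s(σ (Fin.ofNat n (n - 1)), σ 0) = 0 := by
  obtain ⟨σ⟩ := CyclicLabelling.nonempty hn
  obtain ⟨c, -, hc⟩ : ∃ c, c + 1 < n ∧ m s(σ (Fin.ofNat n c), σ (Fin.ofNat n (c + 1))) = 0 := by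
    by_contra! hcon
    refine hm _ ⟨σ, 0, n - 2, n - 1, n - 1, by omega, by omega, by omega, by omega, rfl⟩ ?_
    exact specialMonomial_le σ (by omega) (by omega) (by omega) (fun v _ _ ↦ by omega)
      fun c hc _ ↦ hcon c hc
  refine ⟨σ.rotate (Fin.ofNat n (c + 1)), ?_⟩
  have last_add : Fin.ofNat n (n - 1) + Fin.ofNat n (c + 1) = Fin.ofNat n c := by
    ext
    simp only [Fin.val_add, Fin.val_ofNat, Nat.add_mod_mod, Nat.mod_add_mod]
    rw [show n - 1 + (c + 1) = c + n by omega, Nat.add_mod_right]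
  rwa [σ.rotate_apply, σ.rotate_apply, zero_add, last_add]

lemma exists_threeArcs_of_standard (hn : 4 ≤ n) {m : Sym2 (Fin n) →₀ ℕ}
    (hm : ∀ g ∈ specialMonomials n, ¬ g ≤ m) :
    ∃ (σ : CyclicLabelling n) (P : ThreeArcs n),
      (∀ x, P.root x = x → m s(σ x, σ x) = 0) ∧
      ∀ x y, (SimpleGraph.cycleGraph n).Adj x y → P.root x ≠ P.root y → m s(σ x, σ y) = 0 := by
  have : NeZero n := ⟨by omega⟩
  obtain ⟨σ, hlast⟩ := exists_labelling_of_standard hn hm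
  obtain ⟨v₁, i, v₂, j, v₃, hv₁i, hiv₂, hv₂j, hjv₃, hv₃n, hv₁, hv₂, hv₃, hi, hj⟩ :=
    exists_failures_of_no_special (n := n) (by omega)
      (loop := fun v ↦ m s(σ (Fin.ofNat n v), σ (Fin.ofNat n v)) ≠ 0)
      (edge := fun c ↦ m s(σ (Fin.ofNat n c), σ (Fin.ofNat n (c + 1))) ≠ 0)
      fun p₁ p₂ p₃ p₄ h₁₂ h₂₃ h₃₄ h₄ h ↦ hm _ ⟨σ, p₁, p₂, p₃, p₄, h₁₂, h₂₃, h₃₄, h₄, rfl⟩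
        (specialMonomial_le σ h₁₂ h₂₃ h₃₄ h.1 h.2)
  rw [not_not] at hv₁ hv₂ hv₃ hi hj
  have ofNat_eq {v : ℕ} {x : Fin n} (h : x.val = v) : Fin.ofNat n v = x :=
    h ▸ Fin.ofNat_val_eq_self x
  let P : ThreeArcs n := ⟨⟨v₁, by omega⟩, ⟨i, by omega⟩, ⟨v₂, by omega⟩, ⟨j, by omega⟩, ⟨v₃, hv₃n⟩,
    hv₁i, hiv₂, hv₂j, hjv₃⟩
  have edge_eq_zero {x y : Fin n} (hroot : P.root x ≠ P.root y)
      (hxy : x.val + 1 = y ∨ (x.val + 1 = n ∧ y.val = 0)) : m s(σ x, σ y) = 0 := by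
    rcases hxy with hxy | ⟨hx, hy⟩
    · rcases P.eq_of_root_ne hxy hroot with rfl | rfl
      · rwa [ofNat_eq (x := P.i) rfl, ofNat_eq hxy.symm] at hi
      · rwa [ofNat_eq (x := P.j) rfl, ofNat_eq hxy.symm] at hj
    · rwa [ofNat_eq (x := x) (by omega), show (0 : Fin n) = y from Fin.ext hy.symm] at hlast
  refine ⟨σ, P, fun x hx ↦ ?_, fun x y hadj hroot ↦ ?_⟩
  · rw [← hx, ThreeArcs.root]
    split_ifs
    · rwa [ofNat_eq (x := P.v₁) rfl] at hv₁
    · rwa [ofNat_eq (x := P.v₂) rfl] at hv₂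
    · rwa [ofNat_eq (x := P.v₃) rfl] at hv₃
  · rcases ((cycleGraph_adj_iff_val x y).1 hadj).2 with h | h | h | h
    · exact edge_eq_zero hroot (.inl h)
    · exact Sym2.eq_swap ▸ edge_eq_zero hroot.symm (.inl h)
    · exact Sym2.eq_swap ▸ edge_eq_zero hroot.symm (.inr h.symm)
    · exact edge_eq_zero hroot (.inr h)

end StandardMonomials

section MatchingAlongThePath

variable {κ : Type*} {R C : κ → ℤ}

lemma eq_add_one_of_ascent (hR : Function.Injective R) {a b : ℤ} (ha : ∀ k, R k ≠ a)
    (hC : ∀ x, a ≤ x → x < b → ∃ k, C k = x)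
    (hadj : ∀ k, a ≤ C k → C k < b → |R k - C k| ≤ 1) (hbase : ∀ k, C k = a → R k = a + 1)
    (k : κ) (hak : a ≤ C k) (hkb : C k < b) : R k = C k + 1 := by
  obtain ⟨d, hd⟩ := Int.eq_ofNat_of_zero_le (sub_nonneg.2 hak)
  induction d using Nat.strong_induction_on generalizing k with
  | _ d ih =>
    rcases d with _ | d
    · rw [hbase k (by omega)]
      omega
    obtain ⟨k', hk'⟩ := hC (a + d) (by omega) (by omega)
    have hRk' := ih d (by omega) k' (by omega) (by omega) (by omega)
    have not_stay : R k ≠ C k := fun h ↦ by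
      obtain rfl : k = k' := hR (by omega)
      omega
    have not_back : R k ≠ C k - 1 := fun h ↦ by
      rcases d with _ | d
      · exact ha k (by omega)
      obtain ⟨k'', hk''⟩ := hC (a + d) (by omega) (by omega)
      have hRk'' := ih d (by omega) k'' (by omega) (by omega) (by omega)
      obtain rfl : k = k'' := hR (by omega)
      omega
    have := abs_le.1 (hadj k hak hkb)
    omega

/-- At `p` the value of `R` is not `p`; had it been `p - 1`, then `R` would decrease labels by one
all the way down to the omitted value `q`. -/
lemma eq_add_one_of_omits (hR : Function.Injective R) (hC : Function.Injective C) {p q t : ℤ}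
    (hqp : q < p) (hp : ∀ k, R k ≠ p) (hq : ∀ k, R k ≠ q)
    (hCrange : ∀ x, q < x → x < t → ∃ k, C k = x)
    (hadj : ∀ k, q < C k → C k < t → |R k - C k| ≤ 1) (k : κ) (hpk : p ≤ C k) (hkt : C k < t) :
    R k = C k + 1 := by
  refine eq_add_one_of_ascent hR hp (fun x hpx ↦ hCrange x (by omega))
    (fun k hpk ↦ hadj k (by omega)) (fun k₀ hk₀ ↦ ?_) k hpk hkt
  by_contra hne
  have hRk₀ : R k₀ = p - 1 := by
    have := abs_le.1 (hadj k₀ (by omega) (by omega))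
    have := hp k₀
    omega
  obtain ⟨k₁, hk₁⟩ := hCrange (q + 1) (by omega) (by omega)
  have hRk₁ : -R k₁ = -C k₁ + 1 := by
    refine eq_add_one_of_ascent (R := fun k ↦ -R k) (C := fun k ↦ -C k) (a := -p) (b := -q)
      (neg_injective.comp hR) (fun k ↦ neg_injective.ne (hp k)) (fun x hx hxq ↦ ?_)
      (fun k hk hkq ↦ ?_) (fun k hk ↦ ?_) k₁ (by omega) (by omega)
    · exact (hCrange (-x) (by omega) (by omega)).imp fun k hk ↦ by omega
    · rw [← abs_neg]
      simpa only [neg_sub, sub_neg_eq_add, neg_add_eq_sub, neg_neg] using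
        hadj k (by omega) (by omega)
    · obtain rfl : k = k₀ := hC (by omega)
      omega
  exact hq k₁ (by omega)

lemma eq_sub_one_of_omits (hR : Function.Injective R) (hC : Function.Injective C) {p q t : ℤ}
    (hpq : p < q) (hp : ∀ k, R k ≠ p) (hq : ∀ k, R k ≠ q)
    (hCrange : ∀ x, t < x → x < q → ∃ k, C k = x)
    (hadj : ∀ k, t < C k → C k < q → |R k - C k| ≤ 1) (k : κ) (htk : t < C k) (hkp : C k ≤ p) :
    R k = C k - 1 := by
  have h := eq_add_one_of_omits (R := fun k ↦ -R k) (C := fun k ↦ -C k) (p := -p) (q := -q)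
    (t := -t) (neg_injective.comp hR) (neg_injective.comp hC) (neg_lt_neg hpq)
    (fun k ↦ neg_injective.ne (hp k)) (fun k ↦ neg_injective.ne (hq k))
    (fun x hx hxt ↦ (hCrange (-x) (by omega) (by omega)).imp fun k hk ↦ by omega)
    (fun k hk hkt ↦ by
      rw [← abs_neg]
      simpa only [neg_sub, sub_neg_eq_add, neg_add_eq_sub, neg_neg] using
        hadj k (by omega) (by omega)) k (by omega) (by omega)
  omega

end MatchingAlongThePath

section LeadingMonomials

variable {n : ℕ} {rank : Sym2 (Fin n) → ℕ}

lemma skip_ne_left (p q : ℕ) (k : Fin (n - 2)) : (skip n p q k).val ≠ p := by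
  rw [skip_val]
  split_ifs <;> omega

lemma skip_ne_right {p q : ℕ} (h : p < q) (k : Fin (n - 2)) : (skip n p q k).val ≠ q := by
  rw [skip_val]
  split_ifs <;> omega

lemma exists_skip_eq {p q x : ℕ} (hpq : p < q) (hqn : q < n) (hxn : x < n) (hxp : x ≠ p)
    (hxq : x ≠ q) : ∃ k, (skip n p q k).val = x := by
  refine ⟨⟨if x < p then x else if x < q then x - 1 else x - 2, by split_ifs <;> omega⟩, ?_⟩
  rw [skip_val, Fin.val_mk]
  split_ifs <;> omega

lemma skip_perm_eq {p₁ p₂ p₃ p₄ : ℕ} (h₁₂ : p₁ ≤ p₂) (h₂₃ : p₂ < p₃) (h₃₄ : p₃ ≤ p₄) (h₄ : p₄ < n)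
    {π : Equiv.Perm (Fin (n - 2))}
    (hπ : ∀ k, skip n p₂ p₃ (π k) = skip n p₁ p₄ k ∨
      (SimpleGraph.cycleGraph n).Adj (skip n p₂ p₃ (π k)) (skip n p₁ p₄ k))
    {k : Fin (n - 2)} (hk : skip n p₂ p₃ k ≠ skip n p₁ p₄ k) :
    skip n p₂ p₃ (π k) = skip n p₂ p₃ k := by
  set R : Fin (n - 2) → ℤ := fun k ↦ (skip n p₂ p₃ (π k)).val with hRdef
  set C : Fin (n - 2) → ℤ := fun k ↦ (skip n p₁ p₄ k).val with hCdef
  have hR : Function.Injective R := Nat.cast_injective.comp <|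
    Fin.val_injective.comp <| (skip_strictMono p₂ p₃).injective.comp π.injective
  have hC : Function.Injective C := Nat.cast_injective.comp <|
    Fin.val_injective.comp (skip_strictMono p₁ p₄).injective
  have hR₂ (k) : R k ≠ p₂ := Nat.cast_injective.ne (skip_ne_left p₂ p₃ (π k))
  have hR₃ (k) : R k ≠ p₃ := Nat.cast_injective.ne (skip_ne_right h₂₃ (π k))
  have hCrange (x : ℤ) (h₁ : p₁ < x ∨ p₂ < x) (h₄ : x < p₄ ∨ x < p₃) : ∃ k, C k = x := by
    lift x to ℕ using by omega
    exact (exists_skip_eq (n := n) (x := x) (show p₁ < p₄ by omega) (by omega) (by omega)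
      (by omega) (by omega)).imp fun k hk ↦ congrArg Nat.cast hk
  have hadj (k) (h₀ : 0 < C k) (hn : C k < n - 1) : |R k - C k| ≤ 1 := by
    simp only [hRdef, hCdef] at h₀ hn ⊢
    rcases hπ k with h | h
    · simp [h]
    · rw [cycleGraph_adj_iff_val] at h
      rw [abs_le]
      omega
  have hRk : R k = (skip n p₂ p₃ (π k)).val := rfl
  have hCk : C k = (skip n p₁ p₄ k).val := rfl
  ext
  rcases skip_pair_cases h₁₂ h₂₃ h₃₄ k with ⟨h, -⟩ | ⟨h, hle, hlt⟩ | ⟨h, hle, hlt⟩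
  · exact absurd (Fin.ext h) hk
  · have := eq_sub_one_of_omits hR hC (p := p₂) (q := p₃) (t := p₁) (by omega) hR₂ hR₃
      (fun x hx hx' ↦ hCrange x (.inl hx) (.inr hx'))
      (fun k hk hk' ↦ hadj k (by omega) (by omega)) k (by omega) (by omega)
    omega
  · have := eq_add_one_of_omits hR hC (p := p₃) (q := p₂) (t := p₄) (by omega) hR₃ hR₂
      (fun x hx hx' ↦ hCrange x (.inr hx) (.inl hx'))
      (fun k hk hk' ↦ hadj k (by omega) (by omega)) k (by omega) (by omega)
    omega

lemma degRevLexLT_of_rank_threshold {a b : Sym2 (Fin n) →₀ ℕ} {N : ℕ}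
    (hdeg : a.degree = b.degree) (hle : ∀ v, N ≤ rank v → b v ≤ a v)
    (hlt : ∃ v, N ≤ rank v ∧ b v < a v) : DegRevLexLT rank a b := by
  obtain ⟨v₀, hv₀⟩ := hlt
  obtain ⟨v, hv, hmax⟩ := Finset.exists_max_image {v | N ≤ rank v ∧ b v < a v} rank
    ⟨v₀, by simpa using hv₀⟩
  simp only [Finset.mem_filter, Finset.mem_univ, true_and] at hv hmax
  refine .inr ⟨hdeg, v, hv.2, fun w hw ↦ ?_⟩
  by_contra hne
  have hNw : N ≤ rank w := hv.1.trans hw.le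
  exact (hmax w ⟨hNw, (hle w hNw).lt_of_ne' hne⟩).not_gt hw

lemma degRevLexLT_sum_single {κ : Type*} [Fintype κ] {x y : κ → Sym2 (Fin n)} {F : κ → Prop}
    {N : ℕ} (hF : ∀ k, F k → x k = y k) (hy : ∀ k, ¬ F k → rank (y k) < N)
    (hx : ∃ k, ¬ F k ∧ N ≤ rank (x k)) :
    DegRevLexLT rank (∑ k, Finsupp.single (x k) 1) (∑ k, Finsupp.single (y k) 1) := by
  have ne_y {k v} (hk : ¬ F k) (hv : N ≤ rank v) : y k ≠ v := fun h ↦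
    (hy k hk).not_ge (h ▸ hv)
  have hle (v) (hv : N ≤ rank v) (k) :
      Finsupp.single (y k) 1 v ≤ (Finsupp.single (x k) 1 : Sym2 (Fin n) →₀ ℕ) v := by
    by_cases hk : F k
    · rw [hF k hk]
    · rw [Finsupp.single_eq_of_ne' (ne_y hk hv)]
      exact Nat.zero_le _
  obtain ⟨k, hk, hkN⟩ := hx
  refine degRevLexLT_of_rank_threshold (N := N) (by simp [map_sum]) (fun v hv ↦ ?_)
    ⟨x k, hkN, ?_⟩ <;> rw [Finsupp.finsetSum_apply, Finsupp.finsetSum_apply]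
  · exact Finset.sum_le_sum fun k _ ↦ hle v hv k
  · refine Finset.sum_lt_sum (fun k' _ ↦ hle _ hkN k') ⟨k, Finset.mem_univ k, ?_⟩
    rw [Finsupp.single_eq_of_ne' (ne_y hk hkN), Finsupp.single_eq_same]
    exact one_pos

namespace IsGoodRank

variable (hrank : IsGoodRank n rank)
include hrank

lemma diag_lt (a : Fin n) : rank s(a, a) < n := hrank.2.1 a ▸ a.2

lemma mem_Ico_of_mem_Uset {v : Sym2 (Fin n)} (hn : 2 ≤ n) (hv : v ∈ Uset n) :
    rank v ∈ Set.Ico n (2 * n) := by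
  obtain ⟨-, -, hskip, hfirst, hlast, -⟩ := hrank
  obtain ⟨i, j, rfl, h | ⟨hi, hj⟩ | ⟨hi, hj⟩⟩ := hv
  · rw [hskip i j h, Set.mem_Ico]
    omega
  · rw [hfirst i j hi hj, Set.mem_Ico]
    omega
  · rw [hlast i j hi hj, Set.mem_Ico]
    omega

lemma lt_two_mul_iff (hn : 2 ≤ n) (σ : CyclicLabelling n) (a b : Fin n) :
    rank s(σ a, σ b) < 2 * n ↔ a = b ∨ (SimpleGraph.cycleGraph n).Adj a b := by
  constructor
  · intro h
    rw [or_iff_not_imp_left]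
    intro hab
    rw [← σ.mem_Uset_iff hab]
    by_contra hU
    refine (hrank.2.2.2.2.2 s(σ a, σ b) ?_).not_gt h
    rintro (⟨i, hi⟩ | hU')
    · rcases Sym2.eq_iff.1 hi with ⟨h₁, h₂⟩ | ⟨h₁, h₂⟩ <;>
        exact hab (σ.injective (h₁.trans h₂.symm))
    · exact hU hU'
  · rintro (rfl | h)
    · exact (hrank.diag_lt (σ a)).trans (by omega)
    · exact (hrank.mem_Ico_of_mem_Uset hn ((σ.mem_Uset_iff h.ne).2 h)).2

lemma lt_iff_eq (hn : 2 ≤ n) (σ : CyclicLabelling n) (a b : Fin n) :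
    rank s(σ a, σ b) < n ↔ a = b := by
  refine ⟨fun h ↦ ?_, fun h ↦ h ▸ hrank.diag_lt (σ a)⟩
  refine ((hrank.lt_two_mul_iff hn σ a b).1 (by omega)).resolve_right fun hadj ↦ h.not_ge ?_
  exact (hrank.mem_Ico_of_mem_Uset hn ((σ.mem_Uset_iff hadj.ne).2 hadj)).1

lemma degRevLexLT_specialMonomial (σ : CyclicLabelling n) {p₁ p₂ p₃ p₄ : ℕ} (h₁₂ : p₁ ≤ p₂)
    (h₂₃ : p₂ < p₃) (h₃₄ : p₃ ≤ p₄) (h₄ : p₄ < n) {π : Equiv.Perm (Fin (n - 2))} (hπ : π ≠ 1) :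
    DegRevLexLT rank (∑ k, Finsupp.single s(σ (skip n p₂ p₃ (π k)), σ (skip n p₁ p₄ k)) 1)
      (specialMonomial σ p₁ p₂ p₃ p₄) := by
  have hn : 2 ≤ n := by omega
  by_cases hall : ∀ k, rank s(σ (skip n p₂ p₃ (π k)), σ (skip n p₁ p₄ k)) < 2 * n
  · simp only [hrank.lt_two_mul_iff hn] at hall
    have hfix {k} (hk : skip n p₂ p₃ k ≠ skip n p₁ p₄ k) := skip_perm_eq h₁₂ h₂₃ h₃₄ h₄ hall hk
    refine degRevLexLT_sum_single (F := fun k ↦ skip n p₂ p₃ k ≠ skip n p₁ p₄ k) (N := n)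
      (fun k hk ↦ by rw [hfix hk]) (fun k hk ↦ (hrank.lt_iff_eq hn ..).2 (not_not.1 hk)) ?_
    by_contra! hcon
    refine hπ (Equiv.ext fun k ↦ (skip_strictMono p₂ p₃).injective ?_)
    by_cases hk : skip n p₂ p₃ k = skip n p₁ p₄ k
    · exact ((hrank.lt_iff_eq hn ..).1 (hcon k hk)).trans hk.symm
    · exact hfix hk
  · push Not at hall
    refine degRevLexLT_sum_single (F := fun _ ↦ False) (N := 2 * n) (fun _ h ↦ h.elim)
      (fun k _ ↦ (hrank.lt_two_mul_iff hn ..).2 ?_) (hall.imp fun k hk ↦ ⟨id, hk⟩)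
    rw [cycleGraph_adj_iff_val, Fin.ext_iff]
    rcases skip_pair_cases h₁₂ h₂₃ h₃₄ k with ⟨h, -⟩ | ⟨h, -⟩ | ⟨h, -⟩ <;> omega

end IsGoodRank

section Minors

variable {K : Type*} [Field K] {s : ℕ}

lemma symMinor_eq_sum (a b : Fin s → Fin n) :
    symMinor K a b = ∑ π : Equiv.Perm (Fin s), MvPolynomial.monomial
      (∑ k, Finsupp.single s(a (π k), b k) 1) (((Equiv.Perm.sign π : ℤˣ) : ℤ) : K) := by
  rw [symMinor, Matrix.det_apply']
  refine Finset.sum_congr rfl fun π _ ↦ ?_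
  rw [← mul_one (((Equiv.Perm.sign π : ℤˣ) : ℤ) : K), ← MvPolynomial.C_mul_monomial,
    MvPolynomial.monomial_sum_one, map_intCast]
  rfl

lemma isLeadingMonomial_symMinor_of_forall_lt {a b : Fin s → Fin n}
    (hlt : ∀ π : Equiv.Perm (Fin s), π ≠ 1 → DegRevLexLT rank
      (∑ k, Finsupp.single s(a (π k), b k) 1) (∑ k, Finsupp.single s(a k, b k) 1)) :
    IsLeadingMonomial rank (symMinor K a b) (∑ k, Finsupp.single s(a k, b k) 1) := by
  rw [symMinor_eq_sum]
  constructor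
  · rw [MvPolynomial.mem_support_iff, MvPolynomial.coeff_sum, Finset.sum_eq_single 1]
    · simp
    · intro π _ hπ
      rw [MvPolynomial.coeff_monomial, if_neg]
      intro h
      exact degRevLexLT_irrefl _ (h ▸ hlt π hπ)
    · simp
  · intro ν hν hne
    obtain ⟨π, -, hπ⟩ := Finset.mem_biUnion.1 (MvPolynomial.support_sum hν)
    obtain rfl := Finset.mem_singleton.1 (MvPolynomial.support_monomial_subset hπ)
    exact hlt π fun h ↦ hne (by simp [h])

lemma IsLeadingMonomial.units_mul {f : MvPolynomial (Sym2 (Fin n)) K} {μ : Sym2 (Fin n) →₀ ℕ}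
    (h : IsLeadingMonomial rank f μ) (ε : ℤˣ) :
    IsLeadingMonomial rank (((ε : ℤ) : MvPolynomial (Sym2 (Fin n)) K) * f) μ := by
  rcases Int.units_eq_one_or ε with rfl | rfl
  · simpa using h
  · simpa [IsLeadingMonomial, MvPolynomial.support_neg] using h

lemma exists_strictMono_isLeadingMonomial_symMinor {a b : Fin s → Fin n}
    (ha : Function.Injective a) (hb : Function.Injective b) {μ : Sym2 (Fin n) →₀ ℕ}
    (h : IsLeadingMonomial rank (symMinor K a b) μ) :
    ∃ a' b' : Fin s → Fin n, StrictMono a' ∧ StrictMono b' ∧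
      IsLeadingMonomial rank (symMinor K a' b') μ := by
  set ρ := Tuple.sort a
  set τ := Tuple.sort b
  have symMinor_comp : symMinor K (a ∘ ρ) (b ∘ τ) =
      ((Equiv.Perm.sign ρ : ℤˣ) : ℤ) * (((Equiv.Perm.sign τ : ℤˣ) : ℤ) * symMinor K a b) := by
    simp only [symMinor]
    rw [← Matrix.det_permute', ← Matrix.det_permute]
    rfl
  exact ⟨a ∘ ρ, b ∘ τ, (Tuple.monotone_sort a).strictMono_of_injective (ha.comp ρ.injective),
    (Tuple.monotone_sort b).strictMono_of_injective (hb.comp τ.injective),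
    symMinor_comp ▸ (h.units_mul _).units_mul _⟩

lemma exists_symMinor_of_mem_specialMonomials (hrank : IsGoodRank n rank)
    {g : Sym2 (Fin n) →₀ ℕ} (hg : g ∈ specialMonomials n) :
    ∃ a b : Fin (n - 2) → Fin n, StrictMono a ∧ StrictMono b ∧
      IsLeadingMonomial rank (symMinor K a b) g := by
  obtain ⟨σ, p₁, p₂, p₃, p₄, h₁₂, h₂₃, h₃₄, h₄, rfl⟩ := hg
  exact exists_strictMono_isLeadingMonomial_symMinor
    (σ.injective.comp (skip_strictMono p₂ p₃).injective)
    (σ.injective.comp (skip_strictMono p₁ p₄).injective)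
    (isLeadingMonomial_symMinor_of_forall_lt fun π hπ ↦
      hrank.degRevLexLT_specialMonomial σ h₁₂ h₂₃ h₃₄ h₄ hπ)

end Minors

end LeadingMonomials

section NystromApprox

open Matrix

lemma det_mul_eq_zero_of_card_lt {R α β : Type*} [CommRing R] [IsDomain R] [Fintype α]
    [Fintype β] [DecidableEq β] (h : Fintype.card α < Fintype.card β)
    (P : Matrix β α R) (Q : Matrix α β R) : (P * Q).det = 0 := by
  by_contra hdet
  have hP : LinearIndependent R P.row :=
    .of_comp Q.vecMulLinear (Matrix.linearIndependent_rows_of_det_ne_zero hdet)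
  exact (hP.fintype_card_le_finrank.trans_eq (Module.finrank_pi R)).not_gt h

variable {ι R : Type*} [Fintype ι] [CommRing R] (p : ι → Prop) [DecidablePred p] [DecidableEq ι]
  (M : Matrix ι ι R)

/-- The Nyström approximation of `M`: the matrix of rank at most `#{x // p x}` having the same rows
and columns as `M` at the indices satisfying `p`. It is meaningful when the principal submatrix of
`M` at these indices is invertible. -/
noncomputable def nystromApprox : Matrix ι ι R :=
  M.submatrix id (Subtype.val : {x // p x} → ι) * ((M.toSquareBlockProp p)⁻¹ *
    M.submatrix (Subtype.val : {x // p x} → ι) id)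

variable {p M}

lemma det_submatrix_nystromApprox_eq_zero [IsDomain R] {s : Type*} [Fintype s] [DecidableEq s]
    (hs : Fintype.card {x // p x} < Fintype.card s) (f g : s → ι) :
    ((nystromApprox p M).submatrix f g).det = 0 := by
  rw [nystromApprox, submatrix_mul _ _ f id g Function.bijective_id]
  exact det_mul_eq_zero_of_card_lt hs _ _

lemma isSymm_nystromApprox (hM : M.IsSymm) : (nystromApprox p M).IsSymm := by
  have hB : (M.toSquareBlockProp p).IsSymm := hM.submatrix _
  rw [IsSymm, nystromApprox, transpose_mul, transpose_mul, transpose_nonsing_inv,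
    transpose_submatrix, transpose_submatrix, hB.eq, hM.eq, Matrix.mul_assoc]

lemma nystromApprox_apply_of_left (hB : IsUnit (M.toSquareBlockProp p).det) {x : ι}
    (hx : p x) (y : ι) : nystromApprox p M x y = M x y := by
  have : (nystromApprox p M).submatrix (Subtype.val : {x // p x} → ι) id =
      M.submatrix Subtype.val id := by
    rw [nystromApprox, submatrix_mul _ _ _ id _ Function.bijective_id, submatrix_submatrix,
      submatrix_id_id]
    exact mul_nonsing_inv_cancel_left _ _ hB
  exact congrFun₂ this ⟨x, hx⟩ y

/-- Both matrices agree on the rows and columns in `p`, so evaluating the bilinear form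
`M - nystromApprox p M` on the vectors `u a` and `u b` isolates its entry at `(a, b)`. -/
lemma sq_dvd_sub_nystromApprox (hM : M.IsSymm) (hB : IsUnit (M.toSquareBlockProp p).det) {d : R}
    (u : ι → ι → R) (hu : ∀ a b, ¬ p a → ¬ p b → u a b = if b = a then 1 else 0)
    (hd : ∀ a x, ¬ p a → p x → d ∣ (M *ᵥ u a) x)
    (hsq : ∀ a b, ¬ p a → ¬ p b → d ^ 2 ∣ u a ⬝ᵥ M *ᵥ u b) (x y : ι) :
    d ^ 2 ∣ M x y - nystromApprox p M x y := by
  have sub_eq_zero_of_left {x} (hx : p x) (y) : (M - nystromApprox p M) x y = 0 := by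
    rw [Matrix.sub_apply, nystromApprox_apply_of_left hB hx, sub_self]
  have hsymm := hM.sub (isSymm_nystromApprox (p := p) hM)
  rw [← Matrix.sub_apply]
  by_cases hx : p x
  · exact sub_eq_zero_of_left hx y ▸ dvd_zero _
  by_cases hy : p y
  · exact hsymm.apply x y ▸ sub_eq_zero_of_left hy x ▸ dvd_zero _
  have entry_eq : u x ⬝ᵥ (M - nystromApprox p M) *ᵥ u y = (M - nystromApprox p M) x y := by
    have mulVec_eq (z : ι) :
        ((M - nystromApprox p M) *ᵥ u y) z = (M - nystromApprox p M) z y := by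
      refine (Finset.sum_eq_single y (fun w _ hw ↦ ?_) (by simp)).trans (by simp [hu y y hy hy])
      by_cases hpw : p w
      · exact mul_eq_zero_of_left ((hsymm.apply w z).trans (sub_eq_zero_of_left hpw z)) _
      · rw [hu y w hy hpw, if_neg hw, mul_zero]
    refine (Finset.sum_eq_single x (fun w _ hw ↦ ?_) (by simp)).trans
      (by simp [hu x x hx hx, mulVec_eq])
    by_cases hpw : p w
    · rw [mulVec_eq, sub_eq_zero_of_left hpw, mul_zero]
    · rw [hu x w hx hpw, if_neg hw, zero_mul]
  rw [← entry_eq, sub_mulVec, dotProduct_sub]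
  refine dvd_sub (hsq x y hx hy) ?_
  rw [nystromApprox, ← mulVec_mulVec, dotProduct_mulVec, ← mulVec_transpose, transpose_submatrix,
    hM.eq, ← mulVec_mulVec, sq]
  exact Finset.dvd_sum fun z _ ↦ mul_dvd_mul (hd x z hx z.2)
    (Finset.dvd_sum fun w _ ↦ (hd y w hy w.2).mul_left _)

end NystromApprox

section InitialTerm

variable {L : Type*} [CommRing L] {φ ψ : PowerSeries L} {k : ℕ} {c : L}

/-- The power series `φ` is `c * X ^ k` plus terms of higher order; `c` is allowed to be `0`. -/
def HasInitialTerm (φ : PowerSeries L) (k : ℕ) (c : L) : Prop :=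
  PowerSeries.X ^ k ∣ φ ∧ PowerSeries.coeff k φ = c

lemma X_pow_dvd_monomial {d : ℕ} (hdk : d ≤ k) (c : L) :
    (PowerSeries.X : PowerSeries L) ^ d ∣ PowerSeries.monomial k c :=
  (pow_dvd_pow _ hdk).trans ⟨PowerSeries.C c, by
    rw [PowerSeries.X_pow_eq, ← PowerSeries.monomial_zero_eq_C_apply,
      PowerSeries.monomial_mul_monomial, add_zero, one_mul]⟩

namespace HasInitialTerm

lemma monomial (k : ℕ) (c : L) : HasInitialTerm (PowerSeries.monomial k c) k c :=
  ⟨X_pow_dvd_monomial le_rfl c, PowerSeries.coeff_monomial_same k c⟩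

lemma zero_of_X_pow_dvd (h : PowerSeries.X ^ (k + 1) ∣ φ) : HasInitialTerm φ k 0 :=
  ⟨(pow_dvd_pow _ k.le_succ).trans h, PowerSeries.X_pow_dvd_iff.1 h k k.lt_succ_self⟩

lemma congr (hψ : HasInitialTerm ψ k c) (h : PowerSeries.X ^ (k + 1) ∣ ψ - φ) :
    HasInitialTerm φ k c := by
  obtain ⟨hdvd, hcoeff⟩ := zero_of_X_pow_dvd h
  refine ⟨(dvd_sub_right hψ.1).1 hdvd, ?_⟩
  rw [← hψ.2, eq_comm, ← sub_eq_zero, ← map_sub, hcoeff]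

lemma mul {ψ : PowerSeries L} {j : ℕ} {b : L} (hφ : HasInitialTerm φ k c)
    (hψ : HasInitialTerm ψ j b) : HasInitialTerm (φ * ψ) (k + j) (c * b) := by
  obtain ⟨⟨φ', rfl⟩, rfl⟩ := hφ
  obtain ⟨⟨ψ', rfl⟩, rfl⟩ := hψ
  have h : PowerSeries.X ^ k * φ' * (PowerSeries.X ^ j * ψ') =
      PowerSeries.X ^ (k + j) * (φ' * ψ') := by ring
  exact ⟨⟨_, h⟩, by simp [h, PowerSeries.coeff_X_pow_mul']⟩

lemma pow (hφ : HasInitialTerm φ k c) (j : ℕ) : HasInitialTerm (φ ^ j) (j * k) (c ^ j) := by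
  induction j with
  | zero => simp [HasInitialTerm]
  | succ j ih => simpa only [pow_succ, Nat.succ_mul] using ih.mul hφ

lemma prod {α : Type*} {s : Finset α} {φ : α → PowerSeries L} {k : α → ℕ} {c : α → L}
    (h : ∀ v ∈ s, HasInitialTerm (φ v) (k v) (c v)) :
    HasInitialTerm (∏ v ∈ s, φ v) (∑ v ∈ s, k v) (∏ v ∈ s, c v) := by
  classical
  induction s using Finset.induction_on with
  | empty => simp [HasInitialTerm]
  | insert v s hv ih =>
    simp only [Finset.prod_insert hv, Finset.sum_insert hv]
    exact (h v (Finset.mem_insert_self v s)).mul (ih fun w hw ↦ h w (Finset.mem_insert_of_mem hw))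

end HasInitialTerm

end InitialTerm

section TreePartition

open Matrix

variable {ι : Type*} {G : SimpleGraph ι} {h : ℕ}

/-- A partition of the vertices of `G` into rooted subtrees of height at most `h`, each of them an
induced subgraph, such that any two of them are joined by exactly one edge of `G`. A vertex `x` lies
in the tree with root `root x`; the value of `parent` at a root is irrelevant. -/
structure TreePartition (G : SimpleGraph ι) (h : ℕ) where
  root : ι → ι
  parent : ι → ι
  depth : ι → ℕ
  root_root : ∀ x, root (root x) = root x
  depth_root : ∀ x, depth (root x) = 0
  depth_le : ∀ x, depth x ≤ h
  adj_parent : ∀ x, root x ≠ x → G.Adj x (parent x)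
  root_parent : ∀ x, root x ≠ x → root (parent x) = root x
  depth_eq : ∀ x, root x ≠ x → depth x = depth (parent x) + 1
  eq_parent_of_adj : ∀ x y, G.Adj x y → root x = root y →
    (root x ≠ x ∧ y = parent x) ∨ (root y ≠ y ∧ x = parent y)
  existsUnique_cross : ∀ r s, root r = r → root s = s → r ≠ s →
    ∃! e : ι × ι, root e.1 = r ∧ root e.2 = s ∧ G.Adj e.1 e.2

open scoped Classical in
/-- The order of vanishing prescribed at each position: `0` on the diagonal, `1` on the edges of
`G`, and `4 * h + 3` elsewhere. -/
noncomputable def positionWeight (G : SimpleGraph ι) (h : ℕ) (v : Sym2 ι) : ℕ :=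
  if v.IsDiag then 0 else if v ∈ G.edgeSet then 1 else 4 * h + 3

namespace TreePartition

variable (F : TreePartition G h)

/-- The loops at the roots and the edges of `G` joining different trees. -/
def zeroSet : Set (Sym2 ι) :=
  {v | (∃ x, F.root x = x ∧ v = s(x, x)) ∨ ∃ x y, G.Adj x y ∧ F.root x ≠ F.root y ∧ v = s(x, y)}

variable {F} {x y : ι}

lemma mem_zeroSet_diag : s(x, x) ∈ F.zeroSet ↔ F.root x = x := by
  refine ⟨?_, fun hx ↦ .inl ⟨x, hx, rfl⟩⟩
  rintro (⟨z, hz, hxz⟩ | ⟨z, w, -, hne, hxz⟩)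
  · obtain rfl : x = z := by simpa using hxz
    exact hz
  · rcases Sym2.eq_iff.1 hxz with ⟨rfl, rfl⟩ | ⟨rfl, rfl⟩ <;> exact (hne rfl).elim

lemma mem_zeroSet_of_ne (hxy : x ≠ y) :
    s(x, y) ∈ F.zeroSet ↔ G.Adj x y ∧ F.root x ≠ F.root y := by
  refine ⟨?_, fun hx ↦ .inr ⟨x, y, hx.1, hx.2, rfl⟩⟩
  rintro (⟨z, -, hz⟩ | ⟨z, w, hadj, hne, hz⟩)
  · obtain ⟨rfl, rfl⟩ : x = z ∧ y = z := by simpa using hz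
    exact (hxy rfl).elim
  · rcases Sym2.eq_iff.1 hz with ⟨rfl, rfl⟩ | ⟨rfl, rfl⟩
    exacts [⟨hadj, hne⟩, ⟨hadj.symm, hne.symm⟩]

lemma depth_pos (hx : F.root x ≠ x) : 0 < F.depth x := F.depth_eq x hx ▸ Nat.succ_pos _

lemma depth_eq_zero (hx : F.root x = x) : F.depth x = 0 := hx ▸ F.depth_root x

section Potential

variable {L : Type*} [Field L] (F) (θ : Sym2 ι → L)

/-- The coefficients of the initial terms of the vectors `kernelVector`; the recursion
`potential_mul` makes the initial terms of their images under `laplacian` cancel. -/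
noncomputable def potential (x : ι) : L :=
  ∏ i ∈ Finset.range (F.depth x), -(θ s(F.parent^[i] x, F.parent^[i + 1] x) /
    θ s(F.parent^[i] x, F.parent^[i] x))

variable {F θ}

lemma potential_of_root (hx : F.root x = x) : F.potential θ x = 1 := by
  rw [potential, depth_eq_zero hx, Finset.prod_range_zero]

variable (hθ : ∀ v, θ v ≠ 0)
include hθ

lemma potential_ne_zero (x : ι) : F.potential θ x ≠ 0 :=
  Finset.prod_ne_zero_iff.2 fun _ _ ↦ neg_ne_zero.2 (div_ne_zero (hθ _) (hθ _))

lemma potential_mul (hx : F.root x ≠ x) :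
    F.potential θ x * θ s(x, x) = -(θ s(x, F.parent x) * F.potential θ (F.parent x)) := by
  have hrec : F.potential θ x =
      F.potential θ (F.parent x) * -(θ s(x, F.parent x) / θ s(x, x)) := by
    rw [potential, F.depth_eq x hx, Finset.prod_range_succ']
    rfl
  have := hθ s(x, x)
  rw [hrec]
  field_simp

end Potential

section Laplacian

variable {L : Type*} [Field L] (F) (θ : Sym2 ι → L)

open scoped Classical in
/-- The exponent of the off-diagonal entry of `laplacian` at `(x, y)`. -/
noncomputable def entryExp (x y : ι) : ℕ :=
  if G.Adj x y then if F.root x = F.root y then 1 else 4 * h + 3 - F.depth x - F.depth y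
  else 4 * h + 3

open scoped Classical in
/-- The coefficient of the off-diagonal entry of `laplacian` at `(x, y)`. On an edge joining two
trees it is chosen such that, in the product of `laplacian` with two vectors `kernelVector`, this
edge cancels the contribution of the two roots. -/
noncomputable def entryCoeff (x y : ι) : L :=
  if G.Adj x y ∧ F.root x ≠ F.root y then
    if F.root x = x ∧ F.root y = y then 0
    else -(θ s(F.root x, F.root y) / (F.potential θ x * F.potential θ y))
  else θ s(x, y)

variable {F θ}

lemma entryExp_comm (x y : ι) : F.entryExp x y = F.entryExp y x := by
  classical
  exact if_congr (G.adj_comm x y) (if_congr eq_comm rfl (Nat.sub_right_comm ..)) rfl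

lemma entryCoeff_comm (x y : ι) : F.entryCoeff θ x y = F.entryCoeff θ y x := by
  classical
  simp only [entryCoeff, Sym2.eq_swap (a := F.root x), Sym2.eq_swap (a := x),
    mul_comm (F.potential θ x)]
  exact if_congr (and_congr (G.adj_comm x y) ne_comm) (if_congr and_comm rfl rfl) rfl

lemma one_le_entryExp (x y : ι) : 1 ≤ F.entryExp x y := by
  have := F.depth_le x
  have := F.depth_le y
  rw [entryExp]
  split_ifs <;> omega

lemma le_entryExp_of_root_ne (hxy : F.root x ≠ F.root y) : 2 * h + 2 ≤ F.entryExp x y := by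
  have := F.depth_le x
  have := F.depth_le y
  rw [entryExp, if_neg hxy]
  split_ifs <;> omega

lemma depth_le_entryExp_add (hxy : F.root x = F.root y) :
    F.depth x ≤ F.entryExp x y + F.depth y := by
  have := F.depth_le x
  rw [entryExp, if_pos hxy]
  split_ifs with hadj
  · rcases F.eq_parent_of_adj x y hadj hxy with ⟨hx, rfl⟩ | ⟨hy, rfl⟩
    · rw [F.depth_eq x hx, add_comm]
    · have := F.depth_eq y hy
      omega
  · omega

lemma depth_lt_entryExp_add (hx : F.root x ≠ x) (hxy : F.root x = F.root y)
    (hy : y ≠ F.parent x) : F.depth x < F.entryExp x y + F.depth y := by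
  have := F.depth_le x
  rw [entryExp, if_pos hxy]
  split_ifs with hadj
  · rcases F.eq_parent_of_adj x y hadj hxy with ⟨-, rfl⟩ | ⟨hy', rfl⟩
    · exact (hy rfl).elim
    · have := F.depth_eq y hy'
      omega
  · omega

variable [Fintype ι] [DecidableEq ι]

variable (F θ) in
/-- A symmetric matrix of power series. The diagonal is determined by the requirement that the
vectors `kernelVector` are annihilated by the diagonal block of their tree. -/
noncomputable def laplacian : Matrix ι ι (PowerSeries L) :=
  .of fun x y ↦ if x = y then
      -∑ z with F.root z = F.root x ∧ z ≠ x,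
        PowerSeries.monomial (F.entryExp x z + F.depth z - F.depth x)
          (F.entryCoeff θ x z * F.potential θ z / F.potential θ x)
    else PowerSeries.monomial (F.entryExp x y) (F.entryCoeff θ x y)

variable (F θ) in
/-- A vector supported on the tree with root `r`, with value `1` at `r`, which is almost in the
kernel of `laplacian`. -/
noncomputable def kernelVector (r x : ι) : PowerSeries L :=
  if F.root x = r then PowerSeries.monomial (F.depth x) (F.potential θ x) else 0

lemma laplacian_diag (x : ι) : F.laplacian θ x x = -∑ z with F.root z = F.root x ∧ z ≠ x,
    PowerSeries.monomial (F.entryExp x z + F.depth z - F.depth x)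
      (F.entryCoeff θ x z * F.potential θ z / F.potential θ x) :=
  if_pos rfl

lemma laplacian_of_ne (hxy : x ≠ y) :
    F.laplacian θ x y = PowerSeries.monomial (F.entryExp x y) (F.entryCoeff θ x y) :=
  if_neg hxy

lemma isSymm_laplacian : (F.laplacian θ).IsSymm := by
  refine Matrix.IsSymm.ext fun x y ↦ ?_
  rcases eq_or_ne x y with rfl | hxy
  · rfl
  · rw [laplacian_of_ne hxy, laplacian_of_ne hxy.symm, entryExp_comm, entryCoeff_comm]

omit [Fintype ι] in
lemma kernelVector_of_root {r s : ι} (hs : F.root s = s) :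
    F.kernelVector θ r s = if s = r then 1 else 0 := by
  rw [kernelVector, hs, depth_eq_zero hs, potential_of_root hs, PowerSeries.monomial_zero_eq_C,
    map_one]

lemma laplacian_mulVec_kernelVector_eq_zero (hθ : ∀ v, θ v ≠ 0) (x : ι) :
    (F.laplacian θ *ᵥ F.kernelVector θ (F.root x)) x = 0 := by
  have row_sum : (F.laplacian θ *ᵥ F.kernelVector θ (F.root x)) x =
      ∑ y with F.root y = F.root x, F.laplacian θ x y *
        PowerSeries.monomial (F.depth y) (F.potential θ y) := by
    simp only [mulVec, dotProduct, kernelVector, mul_ite, mul_zero, Finset.sum_filter]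
  have mem_block : x ∈ ({y | F.root y = F.root x} : Finset ι) := by simp
  have erase_block : ({y | F.root y = F.root x} : Finset ι).erase x =
      ({y | F.root y = F.root x ∧ y ≠ x} : Finset ι) := by
    ext y
    simp [and_comm]
  rw [row_sum, ← Finset.add_sum_erase _ _ mem_block, erase_block, laplacian_diag, neg_mul,
    neg_add_eq_zero, Finset.sum_mul]
  refine Finset.sum_congr rfl fun y hy ↦ ?_
  simp only [Finset.mem_filter, Finset.mem_univ, true_and] at hy
  rw [laplacian_of_ne hy.2.symm, PowerSeries.monomial_mul_monomial,
    PowerSeries.monomial_mul_monomial, Nat.sub_add_cancel (depth_le_entryExp_add hy.1.symm),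
    div_mul_cancel₀ _ (potential_ne_zero hθ x)]

lemma X_pow_dvd_laplacian_mulVec_kernelVector (hθ : ∀ v, θ v ≠ 0) (r x : ι) :
    PowerSeries.X ^ (2 * h + 2) ∣ (F.laplacian θ *ᵥ F.kernelVector θ r) x := by
  rcases eq_or_ne (F.root x) r with rfl | hx
  · exact laplacian_mulVec_kernelVector_eq_zero hθ x ▸ dvd_zero _
  refine Finset.dvd_sum fun y _ ↦ ?_
  beta_reduce
  rw [kernelVector]
  split_ifs with hy
  · have hxy : F.root x ≠ F.root y := hy ▸ hx
    rw [laplacian_of_ne (ne_of_apply_ne F.root hxy)]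
    exact (X_pow_dvd_monomial (le_entryExp_of_root_ne hxy) _).mul_right _
  · rw [mul_zero]
    exact dvd_zero _

/-- Between two trees only two terms of the bilinear form have order at most `4 * h + 3`: the one at
the two roots, and its negative at the edge joining the trees. If this edge joins the roots, both
are absent. -/
lemma X_pow_dvd_cross_term (hθ : ∀ v, θ v ≠ 0) {r s : ι} (hrs : r ≠ s) {e : ι × ι}
    (he : G.Adj e.1 e.2)
    (hunique : ∀ e' : ι × ι, F.root e'.1 = r ∧ F.root e'.2 = s ∧ G.Adj e'.1 e'.2 → e' = e)
    (hx : F.root x = r) (hy : F.root y = s) :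
    PowerSeries.X ^ (4 * h + 4) ∣
      F.kernelVector θ r x * (F.laplacian θ x y * F.kernelVector θ s y) -
      ((if (x, y) = (r, s) then 1 else 0) - if (x, y) = e then 1 else 0) *
        PowerSeries.monomial (4 * h + 3) (θ s(r, s)) := by
  subst hx hy
  have depth_le_x := F.depth_le x
  have depth_le_y := F.depth_le y
  have potential_x := potential_ne_zero (F := F) hθ x
  have potential_y := potential_ne_zero (F := F) hθ y
  rw [kernelVector, kernelVector, if_pos rfl, if_pos rfl,
    laplacian_of_ne (ne_of_apply_ne F.root hrs), PowerSeries.monomial_mul_monomial,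
    PowerSeries.monomial_mul_monomial, entryExp, if_neg hrs, entryCoeff]
  have roots_iff : (x, y) = (F.root x, F.root y) ↔ F.root x = x ∧ F.root y = y := by
    rw [Prod.ext_iff, eq_comm, eq_comm (a := y)]
  simp only [roots_iff]
  by_cases hxy : (x, y) = e
  · subst hxy
    rw [if_pos he, if_pos ⟨he, hrs⟩, if_pos rfl]
    split_ifs with hroots
    · simp
    · rw [show F.depth x + (4 * h + 3 - F.depth x - F.depth y + F.depth y) = 4 * h + 3 by omega,
        show F.potential θ x * (-(θ s(F.root x, F.root y) / (F.potential θ x * F.potential θ y)) *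
          F.potential θ y) = -θ s(F.root x, F.root y) by field_simp, map_neg]
      simp
  · have hadj : ¬ G.Adj x y := fun hadj ↦ hxy (hunique (x, y) ⟨rfl, rfl, hadj⟩)
    rw [if_neg hadj, if_neg (fun h ↦ hadj h.1), if_neg hxy]
    split_ifs with hroots
    · simp [depth_eq_zero, potential_of_root, hroots]
    · have depth_pos : 0 < F.depth x + F.depth y := by
        rcases not_and_or.1 hroots with hx | hy
        · exact Nat.add_pos_left (depth_pos hx) _
        · exact Nat.add_pos_right _ (depth_pos hy)
      rw [sub_zero, zero_mul, sub_zero]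
      exact X_pow_dvd_monomial (by omega) _

lemma X_pow_dvd_kernelVector_dotProduct (hθ : ∀ v, θ v ≠ 0) {r s : ι} (hr : F.root r = r)
    (hs : F.root s = s) :
    PowerSeries.X ^ (4 * h + 4) ∣ F.kernelVector θ r ⬝ᵥ F.laplacian θ *ᵥ F.kernelVector θ s := by
  rcases eq_or_ne r s with rfl | hrs
  · refine Finset.dvd_sum fun x _ ↦ ?_
    rcases eq_or_ne (F.root x) r with rfl | hx
    · rw [laplacian_mulVec_kernelVector_eq_zero hθ, mul_zero]
      exact dvd_zero _
    · rw [kernelVector, if_neg hx, zero_mul]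
      exact dvd_zero _
  obtain ⟨e, ⟨he₁, he₂, he⟩, hunique⟩ := F.existsUnique_cross r s hr hs hrs
  set μ := PowerSeries.monomial (4 * h + 3) (θ s(r, s))
  have sum_eq : F.kernelVector θ r ⬝ᵥ F.laplacian θ *ᵥ F.kernelVector θ s =
      ∑ p : ι × ι, (F.kernelVector θ r p.1 * (F.laplacian θ p.1 p.2 * F.kernelVector θ s p.2) -
        ((if p = (r, s) then 1 else 0) - if p = e then 1 else 0) * μ) := by
    simp [Finset.sum_sub_distrib, ← Finset.sum_mul, Fintype.sum_prod_type, dotProduct, mulVec,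
      Finset.mul_sum]
  rw [sum_eq]
  refine Finset.dvd_sum fun ⟨x, y⟩ _ ↦ ?_
  by_cases hx : F.root x = r
  · by_cases hy : F.root y = s
    · exact X_pow_dvd_cross_term hθ hrs he hunique hx hy
    · simp [kernelVector, hy, show y ≠ s by rintro rfl; exact hy hs,
        show (x, y) ≠ e by rintro rfl; exact hy he₂]
  · simp [kernelVector, hx, show x ≠ r by rintro rfl; exact hx hr,
        show (x, y) ≠ e by rintro rfl; exact hx he₁]

lemma hasInitialTerm_laplacian_diag (hθ : ∀ v, θ v ≠ 0) (hx : F.root x ≠ x) :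
    HasInitialTerm (F.laplacian θ x x) 0 (θ s(x, x)) := by
  have parent_ne : F.parent x ≠ x := (F.adj_parent x hx).ne'
  have mem_block : F.parent x ∈ ({z | F.root z = F.root x ∧ z ≠ x} : Finset ι) := by
    simp [F.root_parent x hx, parent_ne]
  have parent_term : -(F.entryCoeff θ x (F.parent x) * F.potential θ (F.parent x) /
      F.potential θ x) = θ s(x, x) := by
    have := potential_ne_zero (F := F) hθ x
    rw [entryCoeff, if_neg fun h ↦ h.2 (F.root_parent x hx).symm, ← neg_div,
      ← potential_mul hθ hx, mul_div_cancel_left₀ _ this]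
  have parent_exp : F.entryExp x (F.parent x) + F.depth (F.parent x) - F.depth x = 0 := by
    rw [entryExp, if_pos (F.adj_parent x hx), if_pos (F.root_parent x hx).symm, F.depth_eq x hx]
    omega
  refine ⟨by simp, ?_⟩
  rw [laplacian_diag, map_neg, map_sum, Finset.sum_eq_single_of_mem _ mem_block, parent_exp,
    PowerSeries.coeff_monomial_same, parent_term]
  intro z hz hzx
  simp only [Finset.mem_filter, Finset.mem_univ, true_and] at hz
  have := depth_lt_entryExp_add hx hz.1.symm hzx
  exact (PowerSeries.coeff_monomial ..).trans (if_neg (by omega))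

lemma X_dvd_laplacian_of_root (hx : F.root x = x) : PowerSeries.X ∣ F.laplacian θ x x := by
  rw [laplacian_diag, dvd_neg]
  refine Finset.dvd_sum fun z _ ↦ ?_
  rw [depth_eq_zero hx, Nat.sub_zero, ← pow_one PowerSeries.X]
  exact X_pow_dvd_monomial (le_add_right (one_le_entryExp x z)) _

lemma isUnit_det_laplacian_nonroot (hθ : ∀ v, θ v ≠ 0) :
    IsUnit ((F.laplacian θ).toSquareBlockProp fun x ↦ F.root x ≠ x).det := by
  have map_eq : PowerSeries.constantCoeff.mapMatrix
      ((F.laplacian θ).toSquareBlockProp fun x ↦ F.root x ≠ x) =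
      Matrix.diagonal fun x ↦ θ s(x.1, x.1) := by
    ext x y
    rw [RingHom.mapMatrix_apply, Matrix.map_apply, Matrix.diagonal_apply,
      ← PowerSeries.coeff_zero_eq_constantCoeff_apply]
    split_ifs with hxy
    · exact hxy ▸ (hasInitialTerm_laplacian_diag hθ x.2).2
    · have := one_le_entryExp (F := F) x.1 y.1
      exact (congrArg _ (laplacian_of_ne (Subtype.coe_ne_coe.2 hxy))).trans
        ((PowerSeries.coeff_monomial ..).trans (if_neg (by omega)))
  rw [PowerSeries.isUnit_iff_constantCoeff, RingHom.map_det, map_eq, Matrix.det_diagonal]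
  exact (Finset.prod_ne_zero_iff.2 fun x _ ↦ hθ _).isUnit

open scoped Classical in
lemma hasInitialTerm_laplacian (hθ : ∀ v, θ v ≠ 0) (x y : ι) :
    HasInitialTerm (F.laplacian θ x y) (positionWeight G h s(x, y))
      (if s(x, y) ∈ F.zeroSet then 0 else θ s(x, y)) := by
  rcases eq_or_ne x y with rfl | hxy
  · rw [positionWeight, if_pos (Sym2.mk_isDiag_iff.2 rfl)]
    simp only [mem_zeroSet_diag]
    split_ifs with hx
    · exact .zero_of_X_pow_dvd (by simpa using X_dvd_laplacian_of_root hx)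
    · exact hasInitialTerm_laplacian_diag hθ hx
  rw [positionWeight, if_neg (Sym2.mk_isDiag_iff.not.2 hxy), laplacian_of_ne hxy, entryExp,
    entryCoeff]
  simp only [SimpleGraph.mem_edgeSet, mem_zeroSet_of_ne hxy]
  by_cases hadj : G.Adj x y
  · simp only [hadj, if_true, true_and]
    by_cases hroot : F.root x = F.root y
    · simpa only [hroot, if_true, ne_eq, not_true_eq_false, if_false] using .monomial 1 _
    · have := F.depth_le x
      have := F.depth_le y
      rw [if_neg hroot, if_pos hroot, if_pos hroot]
      exact .zero_of_X_pow_dvd (X_pow_dvd_monomial (by omega) _)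
  · simpa only [hadj, if_false, false_and] using .monomial _ _

/-- The matrix of the `Φ s(x, y)` is a point of the variety of symmetric matrices of rank at most
the number of vertices which are not roots. -/
lemma exists_det_eq_zero_and_hasInitialTerm (F : TreePartition G h) (hθ : ∀ v, θ v ≠ 0) :
    open scoped Classical in
    ∃ Φ : Sym2 ι → PowerSeries L,
      (∀ s, Fintype.card {x // F.root x ≠ x} < s → ∀ f g : Fin s → ι,
        (Matrix.of fun i j ↦ Φ s(f i, g j)).det = 0) ∧
      ∀ v, HasInitialTerm (Φ v) (positionWeight G h v) (if v ∈ F.zeroSet then 0 else θ v) := by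
  set Y := nystromApprox (fun x ↦ F.root x ≠ x) (F.laplacian θ)
  have hY : Y.IsSymm := isSymm_nystromApprox isSymm_laplacian
  refine ⟨Sym2.lift ⟨Y, fun x y ↦ hY.apply y x⟩, fun s hs f g ↦ ?_, fun v ↦ ?_⟩
  · exact det_submatrix_nystromApprox_eq_zero (hs.trans_eq (Fintype.card_fin s).symm) f g
  induction v with | _ x y => ?_
  have sq_X_pow : (PowerSeries.X ^ (2 * h + 2) : PowerSeries L) ^ 2 =
      PowerSeries.X ^ (4 * h + 4) := by ring
  have hdvd : PowerSeries.X ^ (4 * h + 4) ∣ F.laplacian θ x y - Y x y :=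
    sq_X_pow ▸ sq_dvd_sub_nystromApprox isSymm_laplacian (isUnit_det_laplacian_nonroot hθ)
      (F.kernelVector θ) (fun r s _ hs ↦ kernelVector_of_root (not_not.1 hs))
      (fun r x _ _ ↦ X_pow_dvd_laplacian_mulVec_kernelVector hθ r x)
      (fun r s hr hs ↦ sq_X_pow ▸
        X_pow_dvd_kernelVector_dotProduct hθ (not_not.1 hr) (not_not.1 hs))
      x y
  refine (hasInitialTerm_laplacian hθ x y).congr ((pow_dvd_pow _ ?_).trans hdvd)
  rw [positionWeight]
  split_ifs <;> omega

end Laplacian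

end TreePartition

end TreePartition

section CycleTreePartition

variable {n : ℕ}

namespace ThreeArcs

variable (P : ThreeArcs n)

lemma marks_le : P.v₁ ≤ P.i ∧ P.i < P.v₂ ∧ P.v₂ ≤ P.j ∧ P.j < P.v₃ :=
  ⟨P.v₁_le_i, P.i_lt_v₂, P.v₂_le_j, P.j_lt_v₃⟩

lemma root_eq_or (x : Fin n) : (x ≤ P.i ∧ P.root x = P.v₁) ∨
    (P.i < x ∧ x ≤ P.j ∧ P.root x = P.v₂) ∨ (P.j < x ∧ P.root x = P.v₃) := by
  have := P.i_lt_v₂.trans_le P.v₂_le_j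
  rw [root]
  split_ifs <;> simp_all

lemma root_root (x : Fin n) : P.root (P.root x) = P.root x := by
  have := P.marks_le
  have := P.root_eq_or x
  have := P.root_eq_or (P.root x)
  omega

/-- The neighbour of `x` in the direction of the marked label of its arc. -/
def parent (x : Fin n) : Fin n :=
  if h : x < P.root x then ⟨x + 1, (Nat.succ_le_of_lt h).trans_lt (P.root x).isLt⟩
  else ⟨x - 1, by omega⟩

lemma parent_val {x : Fin n} (hx : P.root x ≠ x) :
    (x < P.root x ∧ (P.parent x : ℕ) = x + 1) ∨ (P.root x < x ∧ (P.parent x : ℕ) + 1 = x) := by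
  rw [parent]
  split_ifs with hlt
  · exact .inl ⟨hlt, rfl⟩
  · have hgt : P.root x < x := by omega
    exact .inr ⟨hgt, Nat.sub_add_cancel ((Nat.zero_le _).trans_lt hgt)⟩

lemma adj_parent {x : Fin n} (hx : P.root x ≠ x) :
    (SimpleGraph.cycleGraph n).Adj x (P.parent x) := by
  have := P.parent_val hx
  rw [cycleGraph_adj_iff_val]
  omega

lemma root_parent {x : Fin n} (hx : P.root x ≠ x) : P.root (P.parent x) = P.root x := by
  have := P.marks_le
  have := P.parent_val hx
  have := P.root_eq_or x
  have := P.root_eq_or (P.parent x)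
  omega

lemma eq_parent_of_adj {x y : Fin n} (hadj : (SimpleGraph.cycleGraph n).Adj x y)
    (hroot : P.root x = P.root y) :
    (P.root x ≠ x ∧ y = P.parent x) ∨ (P.root y ≠ y ∧ x = P.parent y) := by
  rw [cycleGraph_adj_iff_val] at hadj
  have := P.marks_le
  have := P.root_eq_or x
  have := P.root_eq_or y
  have := P.parent_val (x := x)
  have := P.parent_val (x := y)
  omega

lemma root_fixed_iff {x : Fin n} : P.root x = x ↔ x = P.v₁ ∨ x = P.v₂ ∨ x = P.v₃ := by
  have := P.marks_le
  have := P.root_eq_or x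
  omega

lemma existsUnique_cross_of_lt {r s : Fin n} (hr : P.root r = r) (hs : P.root s = s)
    (hrs : r < s) : ∃! e : Fin n × Fin n, P.root e.1 = r ∧ P.root e.2 = s ∧
      (SimpleGraph.cycleGraph n).Adj e.1 e.2 := by
  have hmarks := P.marks_le
  obtain ⟨a, b, hab⟩ : ∃ a b : Fin n, ∀ x y, P.root x = r ∧ P.root y = s ∧
      (SimpleGraph.cycleGraph n).Adj x y ↔ x = a ∧ y = b := by
    have key (x y : Fin n) := And.intro (P.root_eq_or x) (P.root_eq_or y)
    rw [root_fixed_iff] at hr hs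
    rcases hr with rfl | rfl | rfl <;> rcases hs with rfl | rfl | rfl
    all_goals try omega
    on_goal 1 => refine ⟨P.i, ⟨P.i + 1, by omega⟩, fun x y ↦ ?_⟩
    on_goal 2 => refine ⟨⟨0, by omega⟩, ⟨n - 1, by omega⟩, fun x y ↦ ?_⟩
    on_goal 3 => refine ⟨P.j, ⟨P.j + 1, by omega⟩, fun x y ↦ ?_⟩
    all_goals
      have := key x y
      rw [cycleGraph_adj_iff_val, Fin.ext_iff (a := x), Fin.ext_iff (a := y)]
      dsimp only
      omega
  exact ⟨(a, b), (hab a b).2 ⟨rfl, rfl⟩, fun e he ↦ Prod.ext_iff.2 ((hab e.1 e.2).1 he)⟩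

lemma existsUnique_cross {r s : Fin n} (hr : P.root r = r) (hs : P.root s = s) (hrs : r ≠ s) :
    ∃! e : Fin n × Fin n, P.root e.1 = r ∧ P.root e.2 = s ∧
      (SimpleGraph.cycleGraph n).Adj e.1 e.2 := by
  rcases hrs.lt_or_gt with hlt | hgt
  · exact P.existsUnique_cross_of_lt hr hs hlt
  · rw [← (Equiv.prodComm (Fin n) (Fin n)).existsUnique_congr_right]
    simpa only [Equiv.prodComm_apply, Prod.fst_swap, Prod.snd_swap, SimpleGraph.adj_comm,
      and_left_comm] using P.existsUnique_cross_of_lt hs hr hgt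

/-- Each of the three arcs is a path, rooted at its marked label. -/
def treePartition : TreePartition (SimpleGraph.cycleGraph n) n where
  root := P.root
  parent := P.parent
  depth x := x - P.root x + (P.root x - x)
  root_root := P.root_root
  depth_root x := by rw [P.root_root, Nat.sub_self]
  depth_le x := by omega
  adj_parent _ := P.adj_parent
  root_parent _ := P.root_parent
  depth_eq x hx := by
    have := P.parent_val hx
    rw [P.root_parent hx]
    omega
  eq_parent_of_adj _ _ := P.eq_parent_of_adj
  existsUnique_cross _ _ := P.existsUnique_cross

lemma card_root_ne (hn : 4 ≤ n) : Fintype.card {x // P.root x ≠ x} < n - 2 := by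
  have hmarks := P.marks_le
  have hroots : ({P.v₁, P.v₂, P.v₃} : Finset (Fin n)).card = 3 :=
    Finset.card_eq_three.2 ⟨_, _, _, by omega, by omega, by omega, rfl⟩
  have hcompl : Fintype.card {x // P.root x ≠ x} = ({P.v₁, P.v₂, P.v₃}ᶜ : Finset (Fin n)).card :=
    Fintype.card_of_subtype _ fun x ↦ by
      simp only [Finset.mem_compl, Finset.mem_insert, Finset.mem_singleton, ne_eq, root_fixed_iff]
  rw [hcompl, Finset.card_compl, hroots, Fintype.card_fin]
  omega

end ThreeArcs

/-- The image of a tree partition under a graph isomorphism. -/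
def TreePartition.map {ι ι' : Type*} {G : SimpleGraph ι} {G' : SimpleGraph ι'} {h : ℕ} (σ : G ≃g G')
    (F : TreePartition G h) : TreePartition G' h where
  root x := σ (F.root (σ.symm x))
  parent x := σ (F.parent (σ.symm x))
  depth x := F.depth (σ.symm x)
  root_root x := by rw [σ.symm_apply_apply, F.root_root]
  depth_root x := by rw [σ.symm_apply_apply, F.depth_root]
  depth_le x := F.depth_le _
  adj_parent := σ.surjective.forall.2 fun x hx ↦ by
    simpa [σ.map_adj_iff] using F.adj_parent x fun h ↦ hx (by simp [h])
  root_parent := σ.surjective.forall.2 fun x hx ↦ by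
    simpa using F.root_parent x fun h ↦ hx (by simp [h])
  depth_eq := σ.surjective.forall.2 fun x hx ↦ by
    simpa using F.depth_eq x fun h ↦ hx (by simp [h])
  eq_parent_of_adj := σ.surjective.forall₂.2 fun x y hadj hroot ↦ by
    simpa using F.eq_parent_of_adj x y (σ.map_adj_iff.1 hadj) (by simpa using hroot)
  existsUnique_cross := σ.surjective.forall₂.2 fun r s hr hs hrs ↦ by
    rw [← (σ.toEquiv.prodCongr σ.toEquiv).existsUnique_congr_right]
    simpa [σ.map_adj_iff] using
      F.existsUnique_cross r s (by simpa using hr) (by simpa using hs) (by simpa using hrs)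

lemma exists_treePartition_of_standard (hn : 4 ≤ n) {m : Sym2 (Fin n) →₀ ℕ}
    (hm : ∀ g ∈ specialMonomials n, ¬ g ≤ m) :
    ∃ F : TreePartition (uGraph n) n, Fintype.card {x // F.root x ≠ x} < n - 2 ∧
      ∀ v ∈ F.zeroSet, m v = 0 := by
  obtain ⟨σ, P, hloop, hcross⟩ := exists_threeArcs_of_standard hn hm
  let F := P.treePartition.map σ
  have root_apply (x : Fin n) : F.root (σ x) = σ (P.root x) :=
    congrArg (σ ∘ P.root) (σ.symm_apply_apply x)
  refine ⟨F, ?_, ?_⟩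
  · refine (Fintype.card_congr (σ.toEquiv.subtypeEquiv fun x ↦ ?_)).symm.trans_lt
      (P.card_root_ne hn)
    exact not_congr (by rw [← σ.injective.eq_iff, ← root_apply]; rfl)
  · rintro v (⟨x, hx, rfl⟩ | ⟨x, y, hadj, hroot, rfl⟩)
    · obtain ⟨x, rfl⟩ := σ.surjective x
      exact hloop x (σ.injective (by rw [← root_apply, hx]))
    · obtain ⟨x, rfl⟩ := σ.surjective x
      obtain ⟨y, rfl⟩ := σ.surjective y
      rw [root_apply, root_apply, σ.injective.ne_iff] at hroot
      exact hcross x y (σ.map_adj_iff.1 hadj) hroot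

end CycleTreePartition

section InitialForm

variable {K L V : Type*} [CommRing K] [CommRing L] [Algebra K L] {Φ : V → PowerSeries L} {w : V → ℕ}

namespace HasInitialTerm

lemma aeval_monomial {c : V → L} (hΦ : ∀ v, HasInitialTerm (Φ v) (w v) (c v)) (m : V →₀ ℕ)
    (a : K) : HasInitialTerm (aeval Φ (MvPolynomial.monomial m a)) (Finsupp.weight w m)
      (aeval c (MvPolynomial.monomial m a)) := by
  rw [MvPolynomial.aeval_monomial, MvPolynomial.aeval_monomial, ← zero_add (Finsupp.weight w m),
    Finsupp.weight_apply]
  exact .mul ⟨one_dvd _, by simp [PowerSeries.algebraMap_apply]⟩ (.prod fun v _ ↦ (hΦ v).pow (m v))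

/-- The initial form of `f` with respect to the weights `w` governs the initial term of a value. -/
lemma aeval {c : V → L} (hΦ : ∀ v, HasInitialTerm (Φ v) (w v) (c v)) {f : MvPolynomial V K} {k : ℕ}
    (hk : ∀ m ∈ f.support, k ≤ Finsupp.weight w m) :
    HasInitialTerm (aeval Φ f) k (aeval c (weightedHomogeneousComponent w k f)) := by
  classical
  have hmonomial (m : V →₀ ℕ) (hm : m ∈ f.support) :
      HasInitialTerm (MvPolynomial.aeval Φ (MvPolynomial.monomial m (coeff m f))) k
        (if Finsupp.weight w m = k then
          MvPolynomial.aeval c (MvPolynomial.monomial m (coeff m f)) else 0) := by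
    split_ifs with h
    · exact h ▸ aeval_monomial hΦ m _
    · exact zero_of_X_pow_dvd ((pow_dvd_pow _ ((hk m hm).lt_of_ne' h)).trans
        (aeval_monomial hΦ m _).1)
  rw [weightedHomogeneousComponent_apply, map_sum, Finset.sum_filter]
  nth_rw 1 [f.as_sum]
  rw [map_sum]
  refine ⟨Finset.dvd_sum fun m hm ↦ (hmonomial m hm).1, ?_⟩
  rw [map_sum]
  exact Finset.sum_congr rfl fun m hm ↦ (hmonomial m hm).2

end HasInitialTerm

open scoped Classical in
lemma coeff_aeval_ite_mem {Z : Set V} {m : V →₀ ℕ} (hm : ∀ v ∈ Z, m v = 0) (f : MvPolynomial V K) :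
    coeff m (aeval (fun v ↦ if v ∈ Z then 0 else X v : V → MvPolynomial V K) f) = coeff m f := by
  induction f using MvPolynomial.induction_on' with
  | add f g hf hg => rw [map_add, coeff_add, coeff_add, hf, hg]
  | monomial κ a =>
    rw [aeval_monomial, algebraMap_eq]
    by_cases hκ : ∀ v ∈ Z, κ v = 0
    · rw [monomial_eq]
      congr 2
      refine Finset.prod_congr rfl fun v hv ↦ ?_
      simp only [if_neg fun hvZ ↦ Finsupp.mem_support_iff.1 hv (hκ v hvZ)]
    · push Not at hκ
      obtain ⟨v, hvZ, hv⟩ := hκ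
      have hzero : (κ.prod fun v k ↦ (if v ∈ Z then 0 else X v : MvPolynomial V K) ^ k) = 0 :=
        Finset.prod_eq_zero (Finsupp.mem_support_iff.2 hv) (by simp [hvZ, hv])
      rw [hzero, mul_zero, coeff_zero, coeff_monomial, if_neg]
      rintro rfl
      exact hv (hm v hvZ)

open scoped Classical in
lemma aeval_ne_zero_of_hasInitialTerm {x : V → L} (hx : AlgebraicIndependent K x) {Z : Set V}
    (hΦ : ∀ v, HasInitialTerm (Φ v) (w v) (if v ∈ Z then 0 else x v)) {f : MvPolynomial V K}
    {m : V →₀ ℕ} (hmf : m ∈ f.support) (hmZ : ∀ v ∈ Z, m v = 0)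
    (hmin : ∀ κ ∈ f.support, Finsupp.weight w m ≤ Finsupp.weight w κ) : aeval Φ f ≠ 0 := by
  intro hf
  set g := weightedHomogeneousComponent w (Finsupp.weight w m) f
  have hinitial : aeval (fun v ↦ if v ∈ Z then 0 else x v) g = 0 := by
    rw [← (HasInitialTerm.aeval hΦ hmin).2, hf, map_zero]
  have hg : aeval (fun v ↦ if v ∈ Z then 0 else X v : V → MvPolynomial V K) g = 0 := by
    refine hx ?_
    rw [map_zero, ← hinitial, comp_aeval_apply]
    congr 2
    ext v
    split_ifs
    exacts [map_zero _, aeval_X x v]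
  have hcoeff := coeff_aeval_ite_mem hmZ g
  rw [hg, coeff_zero, coeff_weightedHomogeneousComponent, if_pos rfl] at hcoeff
  exact mem_support_iff.1 hmf hcoeff.symm

end InitialForm

section MinorsIdeal

variable {K : Type*} [Field K] {n : ℕ}

lemma aeval_eq_zero_of_mem_minorsIdeal {A : Type*} [CommRing A] [Algebra K A] {t : ℕ}
    {Φ : Sym2 (Fin n) → A}
    (hΦ : ∀ a b : Fin t → Fin n, (Matrix.of fun k l ↦ Φ s(a k, b l)).det = 0)
    {f : MvPolynomial (Sym2 (Fin n)) K} (hf : f ∈ minorsIdeal K n t) : aeval Φ f = 0 := by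
  have hle : minorsIdeal K n t ≤ RingHom.ker (aeval Φ : MvPolynomial (Sym2 (Fin n)) K →ₐ[K] A) := by
    refine Ideal.span_le.2 ?_
    rintro _ ⟨a, b, -, -, rfl⟩
    rw [SetLike.mem_coe, RingHom.mem_ker, symMinor, AlgHom.map_det, ← hΦ a b]
    congr 1
    ext k l
    exact aeval_X Φ _
  exact hle hf

/-- The weights of `positionWeight` do not depend on the monomial, so a monomial of `f` of least
weight can be chosen before the tree partition adapted to it. -/
lemma eq_zero_of_mem_minorsIdeal (hn : 4 ≤ n) {f : MvPolynomial (Sym2 (Fin n)) K}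
    (hf : f ∈ minorsIdeal K n (n - 2))
    (hstd : ∀ m ∈ f.support, ∀ g ∈ specialMonomials n, ¬ g ≤ m) : f = 0 := by
  by_contra hf0
  obtain ⟨m, hm, hmin⟩ := Finset.exists_min_image f.support
    (Finsupp.weight (positionWeight (uGraph n) n)) (support_nonempty.2 hf0)
  obtain ⟨F, hcard, hzero⟩ := exists_treePartition_of_standard hn (hstd m hm)
  let x (v : Sym2 (Fin n)) : FractionRing (MvPolynomial (Sym2 (Fin n)) K) :=
    algebraMap (MvPolynomial (Sym2 (Fin n)) K) _ (X v)
  have hx : AlgebraicIndependent K x :=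
    (algebraicIndependent_X (Sym2 (Fin n)) K).map' (f := IsScalarTower.toAlgHom K _ _)
      (IsFractionRing.injective _ _)
  obtain ⟨Φ, hdet, hΦ⟩ := F.exists_det_eq_zero_and_hasInitialTerm hx.ne_zero
  exact aeval_ne_zero_of_hasInitialTerm hx hΦ hm hzero hmin
    (aeval_eq_zero_of_mem_minorsIdeal (hdet _ hcard) hf)

end MinorsIdeal

/-- **Theorem 1.1(1).** For `n ≥ 4`, the `(n-2)`-minors of the generic symmetric
`n × n` matrix `X` form a Gröbner basis of `I_{n-2}` with respect to `≺`: the initial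
ideal `in_≺(I_{n-2})` is generated by the leading monomials of the `(n-2)`-minors. -/
theorem stmt12 {K : Type*} [Field K] (n : ℕ) (hn : 4 ≤ n)
    (rank : Sym2 (Fin n) → ℕ) (hrank : IsGoodRank n rank) :
    initialIdeal rank (minorsIdeal K n (n - 2)) =
      Ideal.span {p | ∃ a b : Fin (n - 2) → Fin n, StrictMono a ∧ StrictMono b ∧
        ∃ μ : Sym2 (Fin n) →₀ ℕ, IsLeadingMonomial rank (symMinor K a b) μ ∧
          p = MvPolynomial.monomial μ 1} := by
  have leading_iff {f μ} := isLeadingMonomial_iff (K := K) (f := f) (a := μ) hrank.1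
  refine le_antisymm (Ideal.span_le.2 ?_) (Ideal.span_mono ?_)
  · rintro _ ⟨f, hf, hf0, μ, hμ, rfl⟩
    obtain ⟨g, hg, hgμ⟩ : ∃ g ∈ specialMonomials n, g ≤ μ := by
      rw [← (leading_iff.1 hμ).2]
      refine exists_le_degree_of_standard_eq_zero _ (fun g hg ↦ ?_)
        (fun _ ↦ eq_zero_of_mem_minorsIdeal hn) hf hf0
      obtain ⟨a, b, ha, hb, hlead⟩ := exists_symMinor_of_mem_specialMonomials (K := K) hrank hg
      exact ⟨_, Ideal.subset_span ⟨a, b, ha, hb, rfl⟩, leading_iff.1 hlead⟩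
    obtain ⟨a, b, ha, hb, hlead⟩ := exists_symMinor_of_mem_specialMonomials (K := K) hrank hg
    exact Ideal.mem_of_dvd _ (monomial_dvd_monomial.2 ⟨.inr hgμ, dvd_rfl⟩)
      (Ideal.subset_span ⟨a, b, ha, hb, g, hlead, rfl⟩)
  · rintro _ ⟨a, b, ha, hb, μ, hμ, rfl⟩
    exact ⟨_, Ideal.subset_span ⟨a, b, ha, hb, rfl⟩, (leading_iff.1 hμ).1, μ, hμ, rfl⟩
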